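/- Let G be a unified chain graph (UCG) over a finite vertex set V and let p = N(0, Σ) be a Gaussian distribution on ℝ^V with Σ positive definite. Then p satisfies Equation 1 (the chain-component factorization) and the zero restrictions of Equations 6–8 with respect to G if and only if p satisfies the global Markov property with respect to G, i.e. X ⊥_p Y | Z for all pairwise disjoint X, Y, Z ⊆ V such that X ⊥_G Y | Z. -/

import Mathlib

open Matrix MeasureTheory ProbabilityTheory

attribute [local instance] Classical.propDecidable

noncomputable section

variable {V : Type*}

/-- The submatrix of `S` with rows indexed by `X` and columns indexed by `Y`. -/
def msub (S : Matrix V V ℝ) (X Y : Finset V) : Matrix X Y ℝ :=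
  Matrix.of fun i j => S i.1 j.1

/-- Conditional independence `X ⊥ Y | Z` for a centered Gaussian distribution with
positive definite covariance matrix `S`:  `Σ_{X,Y} − Σ_{X,Z} (Σ_{Z,Z})⁻¹ Σ_{Z,Y} = 0`. -/
def gaussCI [Fintype V] [DecidableEq V] (S : Matrix V V ℝ) (X Y Z : Finset V) : Prop :=
  msub S X Y - msub S X Z * (msub S Z Z)⁻¹ * msub S Z Y = 0

/-- Pairwise disjointness of three sets. -/
def PDisj (X Y Z : Finset V) : Prop :=
  Disjoint X Y ∧ Disjoint X Z ∧ Disjoint Y Z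

/-- Pairwise disjointness of four sets. -/
def PDisj4 (X Y W Z : Finset V) : Prop :=
  Disjoint X Y ∧ Disjoint X W ∧ Disjoint X Z ∧ Disjoint Y W ∧ Disjoint Y Z ∧ Disjoint W Z

/-- A graph with three kinds of edges: undirected (`undir`), solid directed (`solid`,
written `A → B`) and dashed directed (`dashed`, written `A ⇢ B`).  No axioms are imposed. -/
structure PreGraph (V : Type*) where
  undir : V → V → Prop
  solid : V → V → Prop
  dashed : V → V → Prop

namespace PreGraph

variable (G : PreGraph V)

/-- There is an undirected edge between `a` and `b`. -/
def und (a b : V) : Prop := G.undir a b ∨ G.undir b a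

/-- `a` and `b` are adjacent. -/
def adj (a b : V) : Prop :=
  G.und a b ∨ G.solid a b ∨ G.solid b a ∨ G.dashed a b ∨ G.dashed b a

/-- The edge between `a` and `b` is undirected or directed (solid or dashed) from `a` to `b`. -/
def fwd (a b : V) : Prop := G.und a b ∨ G.solid a b ∨ G.dashed a b

/-- A route in `G`: a sequence of nodes `nodes 0, nodes 1, …, nodes len` such that
consecutive nodes are adjacent. -/
structure Route (G : PreGraph V) where
  len : ℕ
  nodes : ℕ → V
  adj_step : ∀ i < len, G.adj (nodes i) (nodes (i + 1))

/-- `c` is a collider node between `a` and `b`:  `a ⇢ c ⇠ b`, `a ⇢ c − b` (in either of the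
two traversal directions) or `a ⇢ c ← b` (in either of the two traversal directions). -/
def colliderTriple (a c b : V) : Prop :=
  (G.dashed a c ∧ G.dashed b c) ∨
  (G.dashed a c ∧ G.und c b) ∨ (G.und a c ∧ G.dashed b c) ∨
  (G.dashed a c ∧ G.solid b c) ∨ (G.solid a c ∧ G.dashed b c)

variable {G} in
/-- The node at position `k` of the route `ρ` is a collider node of `ρ`. -/
def Route.colliderNodeAt (ρ : G.Route) (k : ℕ) : Prop :=
  1 ≤ k ∧ k < ρ.len ∧ G.colliderTriple (ρ.nodes (k - 1)) (ρ.nodes k) (ρ.nodes (k + 1))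

variable {G} in
/-- The positions `p, …, q` of `ρ` form a collider section of `ρ`, i.e. a maximal undirected
subroute `C1 − ⋯ − Cn` of `ρ` such that `A → C1 − ⋯ − Cn ← B` is a subroute of `ρ`. -/
def Route.colliderSectionOcc (ρ : G.Route) (p q : ℕ) : Prop :=
  1 ≤ p ∧ p ≤ q ∧ q + 1 ≤ ρ.len ∧
  (∀ m, p ≤ m → m < q → G.und (ρ.nodes m) (ρ.nodes (m + 1))) ∧
  G.solid (ρ.nodes (p - 1)) (ρ.nodes p) ∧ G.solid (ρ.nodes (q + 1)) (ρ.nodes q)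

variable {G} in
/-- The node at position `k` of `ρ` lies in a collider section of `ρ`. -/
def Route.inColliderSectionAt (ρ : G.Route) (k : ℕ) : Prop :=
  ∃ p q, ρ.colliderSectionOcc p q ∧ p ≤ k ∧ k ≤ q

variable {G} in
/-- The route `ρ` is `Z`-open: (i) all collider nodes are in `Z`, (ii) every collider
section contains some node of `Z`, and (iii) every node which is neither a collider node
nor inside a collider section is outside `Z`. -/
def Route.IsZOpen (ρ : G.Route) (Z : Finset V) : Prop :=
  (∀ k, ρ.colliderNodeAt k → ρ.nodes k ∈ Z) ∧
  (∀ p q, ρ.colliderSectionOcc p q → ∃ m, p ≤ m ∧ m ≤ q ∧ ρ.nodes m ∈ Z) ∧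
  (∀ k ≤ ρ.len, ¬ ρ.colliderNodeAt k → ¬ ρ.inColliderSectionAt k → ρ.nodes k ∉ Z)

variable {G} in
/-- A pure collider route (with at least one edge): every intermediate node is a collider
node or lies in a collider section of the route. -/
def Route.IsPureCollider (ρ : G.Route) : Prop :=
  1 ≤ ρ.len ∧ ∀ k, 0 < k → k < ρ.len → ρ.colliderNodeAt k ∨ ρ.inColliderSectionAt k

/-- Separation `X ⊥_G Y | Z`: there is no `Z`-open route in `G` between a node of `X` and a
node of `Y`. -/
def Sep (X Y Z : Finset V) : Prop :=
  ¬ ∃ ρ : G.Route,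
      ((ρ.nodes 0 ∈ X ∧ ρ.nodes ρ.len ∈ Y) ∨ (ρ.nodes 0 ∈ Y ∧ ρ.nodes ρ.len ∈ X)) ∧
      ρ.IsZOpen Z

section Finite

variable [Fintype V] [DecidableEq V]

/-- The fathers of `X`: nodes `b` with `b → a` in `G` for some `a ∈ X`. -/
def fa (X : Finset V) : Finset V := Finset.univ.filter fun b => ∃ a ∈ X, G.solid b a

/-- The mothers of `X`: nodes `b` with `b ⇢ a` in `G` for some `a ∈ X`. -/
def mo (X : Finset V) : Finset V := Finset.univ.filter fun b => ∃ a ∈ X, G.dashed b a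

/-- The parents of `X`. -/
def pa (X : Finset V) : Finset V := G.fa X ∪ G.mo X

/-- The neighbors of `X`: nodes `b` with `b − a` in `G` for some `a ∈ X`. -/
def nb (X : Finset V) : Finset V := Finset.univ.filter fun b => ∃ a ∈ X, G.und b a

/-- There is a descending route from `a` to `b`: all edges undirected or directed in the
direction of travel, containing at least one directed edge. -/
def descends (a b : V) : Prop :=
  ∃ (n : ℕ) (f : ℕ → V), f 0 = a ∧ f n = b ∧ (∀ i < n, G.fwd (f i) (f (i + 1))) ∧
    ∃ i < n, G.solid (f i) (f (i + 1)) ∨ G.dashed (f i) (f (i + 1))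

/-- The non-descendants of `X`. -/
def nd (X : Finset V) : Finset V := Finset.univ.filter fun b => ¬ ∃ a ∈ X, G.descends a b

/-- Connectivity by undirected routes. -/
def uconn : V → V → Prop := Relation.ReflTransGen G.und

/-- The chain component containing `i`. -/
def cc (i : V) : Finset V := Finset.univ.filter fun j => G.uconn i j

/-- The set of chain components of `G`. -/
def ccs : Finset (Finset V) := Finset.univ.image G.cc

/-- The nodes incident to some edge of `G`. -/
def verts : Finset V := Finset.univ.filter fun a => ∃ b, G.adj a b

/-- `π` is a topological ordering of the chain components: it is constant on components and
increases along directed edges. -/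
def IsTopoOrder (π : V → ℕ) : Prop :=
  (∀ a b, G.uconn a b → π a = π b) ∧ ∀ a b, G.solid a b ∨ G.dashed a b → π a < π b

/-- Equation 1: for every topological ordering of the chain components, each component `K`
is independent of the preceding components minus `Pa(K)` given `Pa(K)`. -/
def eq1 (S : Matrix V V ℝ) : Prop :=
  ∀ π : V → ℕ, G.IsTopoOrder π → ∀ i : V,
    gaussCI S (G.cc i) ((Finset.univ.filter fun b => π b < π i) \ G.pa (G.cc i))
      (G.pa (G.cc i))

/-- The regression coefficients `β_K = Σ_{K,Pa(K)} (Σ_{Pa(K),Pa(K)})⁻¹`. -/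
def beta (S : Matrix V V ℝ) (K : Finset V) : Matrix K (G.pa K) ℝ :=
  msub S K (G.pa K) * (msub S (G.pa K) (G.pa K))⁻¹

/-- The conditional covariance matrix `Λ_K`. -/
def lam (S : Matrix V V ℝ) (K : Finset V) : Matrix K K ℝ :=
  msub S K K - msub S K (G.pa K) * (msub S (G.pa K) (G.pa K))⁻¹ * msub S (G.pa K) K

/-- The precision matrix `Ω = (Σ_{K ∪ Pa(K), K ∪ Pa(K)})⁻¹`. -/
def om (S : Matrix V V ℝ) (K : Finset V) : Matrix ↥(K ∪ G.pa K) ↥(K ∪ G.pa K) ℝ :=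
  (msub S (K ∪ G.pa K) (K ∪ G.pa K))⁻¹

/-- Equation 6: `(β_K)_{i,j} = 0` for all `i ∈ K` and `j ∈ Mo(K) ∖ Mo(i)`. -/
def eq6 (S : Matrix V V ℝ) : Prop :=
  ∀ K ∈ G.ccs, ∀ i (hi : i ∈ K), ∀ j (hj : j ∈ G.pa K),
    j ∈ G.mo K → j ∉ G.mo {i} → G.beta S K ⟨i, hi⟩ ⟨j, hj⟩ = 0

/-- Equation 7: `Ω_{i,j} = 0` for all `i ∈ K` and `j ∈ Fa(K) ∖ Fa(i)`. -/
def eq7 (S : Matrix V V ℝ) : Prop :=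
  ∀ K ∈ G.ccs, ∀ i (hi : i ∈ K), ∀ j (hj : j ∈ G.pa K),
    j ∈ G.fa K → j ∉ G.fa {i} →
    G.om S K ⟨i, Finset.mem_union_left _ hi⟩ ⟨j, Finset.mem_union_right _ hj⟩ = 0

/-- Equation 8: `(Λ_K⁻¹)_{i,j} = 0` for all `i ∈ K` and `j ∈ K ∖ ({i} ∪ Ne(i))`. -/
def eq8 (S : Matrix V V ℝ) : Prop :=
  ∀ K ∈ G.ccs, ∀ i (hi : i ∈ K), ∀ j (hj : j ∈ K),
    j ≠ i → j ∉ G.nb {i} → (G.lam S K)⁻¹ ⟨i, hi⟩ ⟨j, hj⟩ = 0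

/-- `p` satisfies Equation 1 and the zero restrictions of Equations 6–8 w.r.t. `G`. -/
def eqs (S : Matrix V V ℝ) : Prop := G.eq1 S ∧ G.eq6 S ∧ G.eq7 S ∧ G.eq8 S

/-- The global Markov property with respect to `G`, for an abstract ternary
(conditional-independence) relation `I`. -/
def globalMP (I : Finset V → Finset V → Finset V → Prop) : Prop :=
  ∀ X Y Z : Finset V, PDisj X Y Z → G.Sep X Y Z → I X Y Z

/-- The block-recursive Markov property (B1)–(B3) with respect to `G`. -/
def blockRecMP (I : Finset V → Finset V → Finset V → Prop) : Prop :=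
  ∀ K ∈ G.ccs, ∀ i ∈ K,
    I {i} (((G.nd K \ K) \ G.fa K) \ G.mo {i}) (G.fa K ∪ G.mo {i}) ∧
    I {i} (((G.nd K \ K) \ G.fa {i}) \ G.mo K) ((K \ {i}) ∪ G.fa {i} ∪ G.mo K) ∧
    ∀ j ∈ K, j ≠ i → j ∉ G.nb {i} → I {i} {j} ((K \ {i, j}) ∪ G.pa K)

/-- The pairwise Markov property (P1)–(P2) with respect to `G`. -/
def pairwiseMP (I : Finset V → Finset V → Finset V → Prop) : Prop :=
  ∀ i j : V, i ≠ j → ¬ G.adj i j → ∀ K ∈ G.ccs, i ∈ K →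
    (j ∈ ((G.nd {i} \ K) \ G.fa K) \ G.mo {i} → I {i} {j} ((G.nd {i} \ K) \ {j})) ∧
    (j ∈ ((G.nd {i} \ {i}) \ G.fa {i}) \ G.mo K → I {i} {j} (G.nd {i} \ {i, j}))

/-- The local Markov property (L1)–(L2) with respect to `G`. -/
def localMP (I : Finset V → Finset V → Finset V → Prop) : Prop :=
  ∀ K ∈ G.ccs, ∀ i ∈ K,
    I {i} (((G.nd {i} \ K) \ G.fa K) \ G.mo {i}) (G.fa K ∪ G.mo {i}) ∧
    I {i} ((((G.nd {i} \ {i}) \ G.pa {i}) \ G.nb {i}) \ G.mo (G.nb {i}))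
      (G.pa {i} ∪ G.nb {i} ∪ G.mo (G.nb {i}))

/-- The subgraph `G^U`: it keeps the edge `A ⊸ B` (with its type and orientation) iff `G`
has a route `A ⊸ B ⊸ ⋯ ⊸ C` with `C ∈ U`, all edges undirected or directed in the
direction of travel, and no subroute `R ⇢ S − T`. -/
def goodFrom (U : Finset V) (a b : V) : Prop :=
  ∃ (f : ℕ → V) (n : ℕ), 1 ≤ n ∧ f 0 = a ∧ f 1 = b ∧ f n ∈ U ∧
    (∀ i < n, G.fwd (f i) (f (i + 1))) ∧
    ∀ i, i + 2 ≤ n → ¬ (G.dashed (f i) (f (i + 1)) ∧ G.und (f (i + 1)) (f (i + 2)))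

/-- The graph `G^U`. -/
def derived (U : Finset V) : PreGraph V where
  undir a b := G.undir a b ∧ G.goodFrom U a b
  solid a b := G.solid a b ∧ G.goodFrom U a b
  dashed a b := G.dashed a b ∧ G.goodFrom U a b

/-- The set `Y'` used in Lemmas 2 and 3:
`Y' = {B' ∈ V(G^{X∪Y∪Z}) ∖ (X ∪ Z) : X ⊥_{G^{X∪Y∪Z}} B' | Z}`. -/
def derivedYp (X Y Z : Finset V) : Finset V :=
  ((G.derived (X ∪ Y ∪ Z)).verts \ (X ∪ Z)).filter fun b =>
    (G.derived (X ∪ Y ∪ Z)).Sep X {b} Z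

/-- The set `X' = V(G^{X∪Y∪Z}) ∖ (Y' ∪ Z)` used in Lemmas 2 and 3. -/
def derivedXp (X Y Z : Finset V) : Finset V :=
  (G.derived (X ∪ Y ∪ Z)).verts \ (G.derivedYp X Y Z ∪ Z)

end Finite

end PreGraph

/-- A chain graph: at most one edge between any pair of distinct nodes (undirected, solid
directed, or dashed directed) and no semidirected cycles. -/
structure ChainGraph (V : Type*) extends PreGraph V where
  undir_symm : ∀ a b, toPreGraph.undir a b → toPreGraph.undir b a
  undir_irrefl : ∀ a, ¬ toPreGraph.undir a a
  solid_irrefl : ∀ a, ¬ toPreGraph.solid a a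
  dashed_irrefl : ∀ a, ¬ toPreGraph.dashed a a
  undir_not_solid : ∀ a b, toPreGraph.undir a b → ¬ toPreGraph.solid a b
  undir_not_dashed : ∀ a b, toPreGraph.undir a b → ¬ toPreGraph.dashed a b
  solid_not_solid : ∀ a b, toPreGraph.solid a b → ¬ toPreGraph.solid b a
  solid_not_dashed : ∀ a b, toPreGraph.solid a b → ¬ toPreGraph.dashed a b
  solid_not_dashed_rev : ∀ a b, toPreGraph.solid a b → ¬ toPreGraph.dashed b a
  dashed_not_dashed : ∀ a b, toPreGraph.dashed a b → ¬ toPreGraph.dashed b a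
  no_semidirected_cycle : ¬ ∃ (f : ℕ → V) (n : ℕ), 1 ≤ n ∧ f n = f 0 ∧
    (toPreGraph.solid (f 0) (f 1) ∨ toPreGraph.dashed (f 0) (f 1)) ∧
    ∀ i < n, toPreGraph.fwd (f i) (f (i + 1))

namespace ChainGraph

variable (G : ChainGraph V)

/-- An LWF chain graph: no dashed directed edges. -/
def IsLWF : Prop := ∀ a b, ¬ G.toPreGraph.dashed a b

/-- An AMP chain graph: no solid directed edges. -/
def IsAMP : Prop := ∀ a b, ¬ G.toPreGraph.solid a b

/-- A unified chain graph: `Fa(K) ∩ Mo(K) = ∅` for every chain component `K`. -/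
def IsUCG [Fintype V] [DecidableEq V] : Prop :=
  ∀ K ∈ G.toPreGraph.ccs, Disjoint (G.toPreGraph.fa K) (G.toPreGraph.mo K)

end ChainGraph


/-- The AMP chain graph obtained from `G` by deleting every solid directed edge. -/
def ChainGraph.dropSolid (G : ChainGraph V) : ChainGraph V where
  undir := G.toPreGraph.undir
  solid _ _ := False
  dashed := G.toPreGraph.dashed
  undir_symm := G.undir_symm
  undir_irrefl := G.undir_irrefl
  solid_irrefl _ h := h
  dashed_irrefl := G.dashed_irrefl
  undir_not_solid _ _ _ h := h
  undir_not_dashed := G.undir_not_dashed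
  solid_not_solid _ _ h := h.elim
  solid_not_dashed _ _ h := h.elim
  solid_not_dashed_rev _ _ h := h.elim
  dashed_not_dashed := G.dashed_not_dashed
  no_semidirected_cycle := fun ⟨f, n, hn, hcyc, hstart, hsteps⟩ =>
    G.no_semidirected_cycle ⟨f, n, hn, hcyc, Or.inr (hstart.resolve_left id),
      fun i hi => (hsteps i hi).imp id (Or.imp False.elim id)⟩

/-- The restriction of `ω : V → ℝ` to the coordinates in `S`. -/
def marg (S : Finset V) : (V → ℝ) → (S → ℝ) := fun ω s => ω s.1

lemma marg_measurable (S : Finset V) : Measurable (marg (V := V) S) :=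
  measurable_pi_lambda _ fun s => measurable_pi_apply s.1

/-- Conditional independence of the coordinate tuples indexed by `X` and `Y` given the
coordinate tuple indexed by `Z`, for a distribution `μ` on `ℝ^V`. -/
def mCI [Fintype V] (μ : Measure (V → ℝ)) [IsFiniteMeasure μ] (X Y Z : Finset V) : Prop :=
  CondIndepFun (MeasurableSpace.comap (marg Z) inferInstance) ((marg_measurable Z).comap_le)
    (marg X) (marg Y) μ

/-- A probability distribution `μ` on `ℝ^V` satisfies the global Markov property with
respect to `G`. -/
def measGlobalMarkov [Fintype V] [DecidableEq V] (G : PreGraph V) (μ : Measure (V → ℝ))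
    [IsFiniteMeasure μ] : Prop :=
  ∀ X Y Z : Finset V, PDisj X Y Z → G.Sep X Y Z → mCI μ X Y Z

/-- A graphoid over `V`: a ternary relation on pairwise disjoint subsets of `V` satisfying
symmetry, decomposition, weak union, contraction and intersection. -/
structure Graphoid (V : Type*) [DecidableEq V] where
  rel : Finset V → Finset V → Finset V → Prop
  symmetry : ∀ X Y Z : Finset V, PDisj X Y Z → rel X Y Z → rel Y X Z
  decomposition : ∀ X Y W Z : Finset V, PDisj4 X Y W Z → rel X (Y ∪ W) Z → rel X Y Z
  weakUnion : ∀ X Y W Z : Finset V, PDisj4 X Y W Z → rel X (Y ∪ W) Z → rel X Y (Z ∪ W)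
  contraction : ∀ X Y W Z : Finset V, PDisj4 X Y W Z →
    rel X Y (Z ∪ W) → rel X W Z → rel X (Y ∪ W) Z
  intersection : ∀ X Y W Z : Finset V, PDisj4 X Y W Z →
    rel X Y (Z ∪ W) → rel X W (Z ∪ Y) → rel X (Y ∪ W) Z

/-- The conditional variance `Σ_{a,a|B} = Σ_{a,a} − Σ_{a,B} (Σ_{B,B})⁻¹ Σ_{B,a}`. -/
def condVar [Fintype V] [DecidableEq V] (S : Matrix V V ℝ) (a : V) (B : Finset V) : ℝ :=
  S a a - ∑ b₁ : B, ∑ b₂ : B, S a b₁.1 * (msub S B B)⁻¹ b₁ b₂ * S b₂.1 a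

/-!
For the equations ⇒ Markov direction, let `β` be the matrix of regression coefficients of every
node on the parents of its chain component and `E` the covariance of the residuals, so that
`(1 - β) Σ (1 - β)ᵀ = E`. Equation 1 makes `E` block diagonal along the components, and splitting
`β = D + F` into the coefficients of mothers and of fathers, Equations 6–8 say that the supports of
`D`, `E⁻¹ F` and `E⁻¹` consist of dashed, solid and undirected edges. Given `Z`, the nodes that are
reachable from `X` along open routes cut these matrices into blocks, and this is enough to make
the conditional covariance of separated sets vanish.

Conversely, each equation says that a conditional covariance or a partial covariance of a node
and its chain component or preceding nodes is zero, and the corresponding separation holds because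
an open route cannot rise above the nodes it conditions on: it would collide at a maximum.
-/

section GaussianLinearAlgebra

lemma msub_posDef {S : Matrix V V ℝ} (hS : S.PosDef) (T : Finset V) : (msub S T T).PosDef :=
  hS.submatrix (e := fun i : T => i.1) Subtype.val_injective

lemma msub_mul_msub [Fintype V] {M N : Matrix V V ℝ} {X Y T : Finset V}
    (h : ∀ i ∈ X, ∀ j ∈ Y, ∀ v ∉ T, M i v * N v j = 0) :
    msub M X T * msub N T Y = msub (M * N) X Y := by
  ext x y
  exact (Finset.sum_coe_sort T fun v => M x v * N v y).trans
    (Finset.sum_subset (Finset.subset_univ T) fun v _ hv => h x x.2 y y.2 v hv)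

variable [DecidableEq V]

lemma isUnit_det_msub {S : Matrix V V ℝ} (hS : S.PosDef) (T : Finset V) :
    IsUnit (msub S T T).det :=
  (Matrix.isUnit_iff_isUnit_det _).1 (msub_posDef hS T).isUnit

/-- The precision matrix `(Σ_{T,T})⁻¹` of the coordinates in `T`, extended by zero. -/
def prec (S : Matrix V V ℝ) (T : Finset V) : Matrix V V ℝ :=
  Matrix.of fun i j => if h : i ∈ T ∧ j ∈ T then (msub S T T)⁻¹ ⟨i, h.1⟩ ⟨j, h.2⟩ else 0

lemma msub_prec (S : Matrix V V ℝ) (T : Finset V) : msub (prec S T) T T = (msub S T T)⁻¹ := by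
  ext i j
  exact dif_pos ⟨i.2, j.2⟩

lemma prec_of_notMem_left (S : Matrix V V ℝ) {T : Finset V} {i : V} (hi : i ∉ T) (j : V) :
    prec S T i j = 0 := dif_neg fun h => hi h.1

lemma prec_of_notMem_right (S : Matrix V V ℝ) {T : Finset V} (i : V) {j : V} (hj : j ∉ T) :
    prec S T i j = 0 := dif_neg fun h => hj h.2

variable [Fintype V]

lemma prec_mul_apply {S : Matrix V V ℝ} {T : Finset V} (hT : IsUnit (msub S T T).det)
    {i j : V} (hi : i ∈ T) (hj : j ∈ T) : (prec S T * S) i j = (1 : Matrix V V ℝ) i j := by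
  have hmul : msub (prec S T * S) T T = 1 := by
    rw [← msub_mul_msub (T := T) fun i _ j _ v hv => by rw [prec_of_notMem_right S i hv, zero_mul],
      msub_prec, Matrix.nonsing_inv_mul _ hT]
  simpa only [msub, Matrix.of_apply, Matrix.one_apply, Subtype.mk.injEq]
    using congrFun₂ hmul ⟨i, hi⟩ ⟨j, hj⟩

lemma mul_prec_apply {S : Matrix V V ℝ} {T : Finset V} (hT : IsUnit (msub S T T).det)
    {i j : V} (hi : i ∈ T) (hj : j ∈ T) : (S * prec S T) i j = (1 : Matrix V V ℝ) i j := by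
  have hmul : msub (S * prec S T) T T = 1 := by
    rw [← msub_mul_msub (T := T) fun i _ j _ v hv => by rw [prec_of_notMem_left S hv, mul_zero],
      msub_prec, Matrix.mul_nonsing_inv _ hT]
  simpa only [msub, Matrix.of_apply, Matrix.one_apply, Subtype.mk.injEq]
    using congrFun₂ hmul ⟨i, hi⟩ ⟨j, hj⟩

lemma vecMul_vecMul_prec {S : Matrix V V ℝ} {T : Finset V} (hT : IsUnit (msub S T T).det)
    {w : V → ℝ} (hw : ∀ v ∉ T, w v = 0) : (w ᵥ* S) ᵥ* prec S T = w := by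
  rw [Matrix.vecMul_vecMul]
  funext j
  by_cases hj : j ∈ T
  · refine (Finset.sum_congr rfl fun i _ => ?_).trans (congrFun (Matrix.vecMul_one w) j)
    by_cases hi : i ∈ T
    · exact congrArg (w i * ·) (mul_prec_apply hT hi hj)
    · rw [hw i hi, zero_mul, zero_mul]
  · rw [hw j hj]
    refine Finset.sum_eq_zero fun i _ => mul_eq_zero_of_right _ <|
      Finset.sum_eq_zero fun k _ => mul_eq_zero_of_right _ (prec_of_notMem_right S k hj)

lemma vecMul_prec_congr (S : Matrix V V ℝ) {T : Finset V} {u v : V → ℝ}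
    (h : ∀ i ∈ T, u i = v i) : u ᵥ* prec S T = v ᵥ* prec S T := by
  funext j
  refine Finset.sum_congr rfl fun i _ => ?_
  by_cases hi : i ∈ T
  · rw [h i hi]
  · exact (mul_eq_zero_of_right _ (prec_of_notMem_left S hi j)).trans
      (mul_eq_zero_of_right _ (prec_of_notMem_left S hi j)).symm

/-- The matrix `Σ_{V,Z} (Σ_{Z,Z})⁻¹` of regression coefficients of all coordinates on the
coordinates in `Z`, extended by zero. -/
def regr (S : Matrix V V ℝ) (Z : Finset V) : Matrix V V ℝ := S * prec S Z

lemma regr_of_notMem (S : Matrix V V ℝ) {Z : Finset V} (x : V) {q : V} (hq : q ∉ Z) :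
    regr S Z x q = 0 :=
  Finset.sum_eq_zero fun k _ => mul_eq_zero_of_right _ (prec_of_notMem_right S k hq)

lemma msub_regr (S : Matrix V V ℝ) (X Z : Finset V) :
    msub (regr S Z) X Z = msub S X Z * (msub S Z Z)⁻¹ := by
  rw [regr, ← msub_mul_msub (T := Z) fun i _ j _ v hv => by rw [prec_of_notMem_left S hv, mul_zero],
    msub_prec]

/-- The matrix `Σ − Σ_{V,Z} (Σ_{Z,Z})⁻¹ Σ_{Z,V}` of conditional covariances given the
coordinates in `Z`. -/
def condCov (S : Matrix V V ℝ) (Z : Finset V) : Matrix V V ℝ := (1 - regr S Z) * S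

lemma msub_condCov (S : Matrix V V ℝ) (X Y Z : Finset V) :
    msub (condCov S Z) X Y = msub S X Y - msub S X Z * (msub S Z Z)⁻¹ * msub S Z Y := by
  rw [condCov, Matrix.sub_mul, Matrix.one_mul, ← msub_regr,
    msub_mul_msub fun i _ j _ v hv => by rw [regr_of_notMem S i hv, zero_mul]]
  rfl

lemma gaussCI_iff_condCov {S : Matrix V V ℝ} {X Y Z : Finset V} :
    gaussCI S X Y Z ↔ ∀ x ∈ X, ∀ y ∈ Y, condCov S Z x y = 0 := by
  rw [gaussCI, ← msub_condCov]
  exact ⟨fun h x hx y hy => congrFun₂ h ⟨x, hx⟩ ⟨y, hy⟩, fun h => by ext x y; exact h x x.2 y y.2⟩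

variable {S : Matrix V V ℝ}

lemma eq_regr_of_vecMul_eq (hS : S.PosDef) {Z : Finset V} {x : V} {r : V → ℝ}
    (hr : ∀ q ∉ Z, r q = 0) (hrS : ∀ w ∈ Z, (r ᵥ* S) w = S x w) : r = regr S Z x :=
  (vecMul_vecMul_prec (isUnit_det_msub hS Z) hr).symm.trans (vecMul_prec_congr S hrS)

lemma condCov_of_mem (hS : S.PosDef) {Z : Finset V} (x : V) {w : V} (hw : w ∈ Z) :
    condCov S Z x w = 0 := by
  have hinv : msub S {x} Z * (msub S Z Z)⁻¹ * msub S Z Z = msub S {x} Z :=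
    Matrix.nonsing_inv_mul_cancel_right _ _ (isUnit_det_msub hS Z)
  have hzero : msub (condCov S Z) {x} Z = 0 := by rw [msub_condCov, hinv, sub_self]
  exact congrFun₂ hzero ⟨x, Finset.mem_singleton_self x⟩ ⟨w, hw⟩

lemma one_sub_regr_of_notMem (S : Matrix V V ℝ) {Z : Finset V} (x : V) {q : V} (hq : q ∉ Z) :
    (1 - regr S Z) x q = (1 : Matrix V V ℝ) x q := by
  rw [Matrix.sub_apply, regr_of_notMem S x hq, sub_zero]

lemma condCov_vecMul_prec (hS : S.PosDef) {T Z : Finset V} (hZT : Z ⊆ T) {x : V} (hx : x ∈ T) :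
    condCov S Z x ᵥ* prec S T = (1 - regr S Z) x := by
  refine vecMul_vecMul_prec (isUnit_det_msub hS T) fun v hv => ?_
  have hxv : x ≠ v := fun h => hv (h ▸ hx)
  rw [one_sub_regr_of_notMem S x fun h => hv (hZT h), Matrix.one_apply_ne hxv]

lemma msub_condCov_mul_msub_prec (hS : S.PosDef) {K P : Finset V} (Y : Finset V) :
    msub (condCov S P) K K * msub (prec S (K ∪ P)) K Y = msub (1 - regr S P) K Y := by
  have hvanish : ∀ i ∈ K, ∀ j ∈ Y, ∀ v ∉ K,
      condCov S P i v * prec S (K ∪ P) v j = 0 := fun i _ j _ v hvK => by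
    by_cases hvP : v ∈ P
    · rw [condCov_of_mem hS i hvP, zero_mul]
    · rw [prec_of_notMem_left S (by simp [hvK, hvP]), mul_zero]
  rw [msub_mul_msub hvanish]
  ext x y
  exact congrFun (condCov_vecMul_prec hS Finset.subset_union_right
    (Finset.mem_union_left P x.2)) y

lemma msub_condCov_mul_msub_prec_self (hS : S.PosDef) {K P : Finset V} (hKP : Disjoint K P) :
    msub (condCov S P) K K * msub (prec S (K ∪ P)) K K = 1 := by
  rw [msub_condCov_mul_msub_prec hS]
  ext x y
  refine (one_sub_regr_of_notMem S _ (Finset.disjoint_left.1 hKP y.2)).trans ?_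
  simp only [Matrix.one_apply, Subtype.ext_iff]

lemma inv_msub_condCov (hS : S.PosDef) {K P : Finset V} (hKP : Disjoint K P) :
    (msub (condCov S P) K K)⁻¹ = msub (prec S (K ∪ P)) K K :=
  Matrix.inv_eq_right_inv (msub_condCov_mul_msub_prec_self hS hKP)

lemma inv_msub_condCov_mul_msub_regr (hS : S.PosDef) {K P Y : Finset V} (hKP : Disjoint K P)
    (hKY : Disjoint K Y) :
    (msub (condCov S P) K K)⁻¹ * msub (regr S P) K Y = -msub (prec S (K ∪ P)) K Y := by
  have hneg : msub (regr S P) K Y = -msub (1 - regr S P) K Y := by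
    ext x y
    have hxy : (x : V) ≠ y := fun h => Finset.disjoint_left.1 hKY x.2 (h ▸ y.2)
    simp [msub, Matrix.one_apply_ne hxy]
  rw [hneg, ← msub_condCov_mul_msub_prec hS, Matrix.mul_neg, ← Matrix.mul_assoc,
    inv_msub_condCov hS hKP, mul_eq_one_comm.1 (msub_condCov_mul_msub_prec_self hS hKP),
    Matrix.one_mul]

lemma prec_eq_zero_of_gaussCI (hS : S.PosDef) {T : Finset V} {i j : V} (hi : i ∈ T)
    (hij : i ≠ j) (h : gaussCI S {i} {j} (T \ {i, j})) : prec S T i j = 0 := by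
  set Z := T \ {i, j} with hZ
  have hrow : condCov S Z i ᵥ* prec S T = (condCov S Z i i • Pi.single i 1) ᵥ* prec S T := by
    refine vecMul_prec_congr S fun v hv => ?_
    by_cases hvi : v = i
    · simp [hvi]
    · rw [Pi.smul_apply, Pi.single_eq_of_ne hvi, smul_zero]
      by_cases hvj : v = j
      · exact gaussCI_iff_condCov.1 h i (by simp) v (by simp [hvj])
      · exact condCov_of_mem hS i (by simp [hZ, hv, hvi, hvj])
  rw [condCov_vecMul_prec hS Finset.sdiff_subset hi, Matrix.smul_vecMul,
    Matrix.single_one_vecMul] at hrow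
  have hii := congrFun hrow i
  have hij' := congrFun hrow j
  rw [one_sub_regr_of_notMem S i (by simp), Matrix.one_apply_eq] at hii
  rw [one_sub_regr_of_notMem S i (by simp), Matrix.one_apply_ne hij] at hij'
  refine (mul_eq_zero.1 hij'.symm).resolve_left fun hzero => one_ne_zero (α := ℝ) ?_
  rw [hii, hzero, zero_smul, Pi.zero_apply]

lemma gaussCI_of_precision_separated (hS : S.PosDef) {P : Matrix V V ℝ} (hP : P.PosDef)
    {X Y Z T : Finset V} (hXT : X ⊆ T) (hT : Disjoint T (Y ∪ Z))
    (hsep : ∀ i ∈ T, ∀ j ∉ T ∪ Z, P i j = 0)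
    (hmarg : ∀ g : V → ℝ, (∀ v ∉ X ∪ Z, (g ᵥ* P) v = 0) →
      ∀ v ∈ Y ∪ Z, ((g ᵥ* P) ᵥ* S) v = g v) : gaussCI S X Y Z := by
  refine gaussCI_iff_condCov.2 fun x hx y hy => ?_
  set g := prec P T x
  have hg_support : ∀ v ∉ T, g v = 0 := fun v hv => prec_of_notMem_right P x hv
  have hgP : ∀ v ∉ Z, (g ᵥ* P) v = (1 : Matrix V V ℝ) x v := fun v hvZ => by
    by_cases hvT : v ∈ T
    · exact prec_mul_apply (isUnit_det_msub hP T) (hXT hx) hvT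
    · have hxv : x ≠ v := fun h => hvT (h ▸ hXT hx)
      rw [Matrix.one_apply_ne hxv]
      refine Finset.sum_eq_zero fun i _ => ?_
      by_cases hiT : i ∈ T
      · exact mul_eq_zero_of_right _ (hsep i hiT v (by simp [hvT, hvZ]))
      · rw [hg_support i hiT, zero_mul]
  have hgPS : ∀ v ∈ Y ∪ Z, ((g ᵥ* P) ᵥ* S) v = 0 := fun v hv => by
    rw [hmarg g (fun u hu => ?_) v hv, hg_support v fun hvT => Finset.disjoint_left.1 hT hvT hv]
    rw [Finset.mem_union, not_or] at hu
    have hxu : x ≠ u := fun h => hu.1 (h ▸ hx)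
    rw [hgP u hu.2, Matrix.one_apply_ne hxu]
  have hregr : (1 : Matrix V V ℝ) x - g ᵥ* P = regr S Z x := by
    refine eq_regr_of_vecMul_eq hS (fun q hq => ?_) fun w hw => ?_
    · rw [Pi.sub_apply, hgP q hq, sub_self]
    · rw [Matrix.sub_vecMul, Pi.sub_apply, hgPS w (Finset.mem_union_right Y hw), sub_zero]
      exact congrFun₂ (Matrix.one_mul S) x w
  have hcond : condCov S Z x = (g ᵥ* P) ᵥ* S := by
    rw [← sub_sub_cancel ((1 : Matrix V V ℝ) x) (g ᵥ* P), hregr]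
    rfl
  rw [hcond, hgPS y (Finset.mem_union_left Z hy)]

end GaussianLinearAlgebra

section Routes

namespace PreGraph

namespace Route

variable {H : PreGraph V} {ρ : H.Route} {w : V} {Z : Finset V}

/-- The route consisting of a single node. -/
def single (H : PreGraph V) (v : V) : H.Route where
  len := 0
  nodes _ := v
  adj_step _ hi := absurd hi (Nat.not_lt_zero _)

/-- The route obtained by appending a node. -/
def snoc (ρ : H.Route) (w : V) (h : H.adj (ρ.nodes ρ.len) w) : H.Route where
  len := ρ.len + 1
  nodes i := if i ≤ ρ.len then ρ.nodes i else w
  adj_step i hi := by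
    rcases Nat.lt_succ_iff_lt_or_eq.1 hi with hi | rfl
    · simpa [hi.le, Nat.succ_le_of_lt hi] using ρ.adj_step i hi
    · simpa using h

/-- Openness of a route as far as it does not depend on a continuation of the route: `Z`-openness,
except that the nodes from position `t` on may lie in `Z` without being colliders. -/
def OpenBefore (Z : Finset V) (t : ℕ) (ρ : H.Route) : Prop :=
  (∀ k, ρ.colliderNodeAt k → ρ.nodes k ∈ Z) ∧
  (∀ p q, ρ.colliderSectionOcc p q → ∃ m, p ≤ m ∧ m ≤ q ∧ ρ.nodes m ∈ Z) ∧
  (∀ k < t, ¬ ρ.colliderNodeAt k → ¬ ρ.inColliderSectionAt k → ρ.nodes k ∉ Z)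

/-- The last section of the route is entered at position `p` by a solid arrow, so that it becomes
a collider section when the route is continued against a solid arrow. -/
def Pending (p : ℕ) (ρ : H.Route) : Prop :=
  1 ≤ p ∧ p ≤ ρ.len ∧ (∀ m, p ≤ m → m < ρ.len → H.und (ρ.nodes m) (ρ.nodes (m + 1))) ∧
    H.solid (ρ.nodes (p - 1)) (ρ.nodes p)

/-- The route has a last edge `a ⊸ b`, and it satisfies `E a b`. -/
def LastEdge (E : V → V → Prop) (ρ : H.Route) : Prop :=
  1 ≤ ρ.len ∧ E (ρ.nodes (ρ.len - 1)) (ρ.nodes ρ.len)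

lemma snoc_nodes_of_le (h : H.adj (ρ.nodes ρ.len) w) {i : ℕ} (hi : i ≤ ρ.len) :
    (ρ.snoc w h).nodes i = ρ.nodes i := if_pos hi

lemma snoc_nodes_last (h : H.adj (ρ.nodes ρ.len) w) :
    (ρ.snoc w h).nodes (ρ.len + 1) = w := if_neg (by omega)

lemma snoc_len (h : H.adj (ρ.nodes ρ.len) w) : (ρ.snoc w h).len = ρ.len + 1 := rfl

lemma lastEdge_snoc (h : H.adj (ρ.nodes ρ.len) w) {E : V → V → Prop} :
    (ρ.snoc w h).LastEdge E ↔ E (ρ.nodes ρ.len) w := by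
  simp [LastEdge, snoc_len, snoc_nodes_last, snoc_nodes_of_le]

lemma colliderNodeAt_snoc (h : H.adj (ρ.nodes ρ.len) w) (k : ℕ) :
    (ρ.snoc w h).colliderNodeAt k ↔ ρ.colliderNodeAt k ∨
      (k = ρ.len ∧ ρ.LastEdge fun a b => H.colliderTriple a b w) := by
  unfold colliderNodeAt LastEdge
  grind [snoc_len, snoc_nodes_last, snoc_nodes_of_le]

lemma colliderSectionOcc_snoc (h : H.adj (ρ.nodes ρ.len) w) (p q : ℕ) :
    (ρ.snoc w h).colliderSectionOcc p q ↔ ρ.colliderSectionOcc p q ∨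
      (q = ρ.len ∧ ρ.Pending p ∧ H.solid w (ρ.nodes ρ.len)) := by
  unfold colliderSectionOcc Pending
  grind [snoc_len, snoc_nodes_last, snoc_nodes_of_le]

lemma pending_snoc (h : H.adj (ρ.nodes ρ.len) w) (p : ℕ) :
    (ρ.snoc w h).Pending p ↔ (ρ.Pending p ∧ H.und (ρ.nodes ρ.len) w) ∨
      (p = ρ.len + 1 ∧ H.solid (ρ.nodes ρ.len) w) := by
  unfold Pending
  grind [snoc_len, snoc_nodes_last, snoc_nodes_of_le]

lemma isZOpen_iff : ρ.IsZOpen Z ↔ ρ.OpenBefore Z ρ.len ∧ ρ.nodes ρ.len ∉ Z := by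
  unfold IsZOpen OpenBefore inColliderSectionAt colliderNodeAt colliderSectionOcc
  grind

lemma OpenBefore.snoc {t t' : ℕ} (hρ : ρ.OpenBefore Z t) (h : H.adj (ρ.nodes ρ.len) w)
    (ht' : t' ≤ ρ.len + 1)
    (hcollider : ρ.LastEdge (fun a b => H.colliderTriple a b w) → ρ.nodes ρ.len ∈ Z)
    (hsection : ∀ p, ρ.Pending p → H.solid w (ρ.nodes ρ.len) →
      ∃ m, p ≤ m ∧ m ≤ ρ.len ∧ ρ.nodes m ∈ Z)
    (hnon : ∀ k, t ≤ k → k < t' → ρ.nodes k ∈ Z →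
      (ρ.snoc w h).colliderNodeAt k ∨ (ρ.snoc w h).inColliderSectionAt k) :
    (ρ.snoc w h).OpenBefore Z t' := by
  obtain ⟨hnode, hsec, hout⟩ := hρ
  refine ⟨fun k hk => ?_, fun p q hpq => ?_, fun k hk hkn hks => ?_⟩
  · rcases (colliderNodeAt_snoc h k).1 hk with hk | ⟨rfl, hlast⟩
    · rw [snoc_nodes_of_le h hk.2.1.le]
      exact hnode k hk
    · rw [snoc_nodes_of_le h le_rfl]
      exact hcollider hlast
  · rcases (colliderSectionOcc_snoc h p q).1 hpq with hpq | ⟨rfl, hp, hw⟩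
    · obtain ⟨m, hpm, hmq, hm⟩ := hsec p q hpq
      exact ⟨m, hpm, hmq, by rwa [snoc_nodes_of_le h (by have := hpq.2.2.1; omega)]⟩
    · obtain ⟨m, hpm, hm, hmZ⟩ := hsection p hp hw
      exact ⟨m, hpm, hm, by rwa [snoc_nodes_of_le h hm]⟩
  · rw [snoc_nodes_of_le h (by omega)]
    rcases lt_or_ge k t with hkt | hkt
    · refine hout k hkt (fun hc => hkn ((colliderNodeAt_snoc h k).2 (.inl hc))) ?_
      rintro ⟨p, q, hpq, hpk, hkq⟩
      exact hks ⟨p, q, (colliderSectionOcc_snoc h p q).2 (.inl hpq), hpk, hkq⟩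
    · exact fun hkZ => (hnon k hkt hk hkZ).elim hkn hks

/-- The route can be continued to an open one by any edge which makes its last node a collider node
exactly when `E` holds for the last edge, up to the requirement on collider sections. -/
def OpenTo (Z : Finset V) (E : V → V → Prop) (ρ : H.Route) : Prop :=
  ρ.OpenBefore Z ρ.len ∧ (ρ.nodes ρ.len ∈ Z ↔ ρ.LastEdge E)

lemma OpenTo.snoc (h : H.adj (ρ.nodes ρ.len) w)
    (hρ : ρ.OpenTo Z fun a b => H.colliderTriple a b w)
    (hsection : ∀ p, ρ.Pending p → H.solid w (ρ.nodes ρ.len) → ρ.nodes ρ.len ∈ Z) :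
    (ρ.snoc w h).OpenBefore Z (ρ.snoc w h).len := by
  refine hρ.1.snoc h le_rfl hρ.2.2 (fun p hp hw => ⟨_, hp.2.1, le_rfl, hsection p hp hw⟩)
    fun k hk hk' hkZ => ?_
  obtain rfl : k = ρ.len := by rw [snoc_len] at hk'; omega
  exact .inl ((colliderNodeAt_snoc h _).2 (.inr ⟨rfl, hρ.2.1 hkZ⟩))

lemma openBefore_single (v : V) : (single H v).OpenBefore Z 0 := by
  unfold OpenBefore colliderNodeAt colliderSectionOcc single
  grind

lemma LastEdge.mono {E E' : V → V → Prop} (hρ : ρ.LastEdge E)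
    (h : ∀ a, E a (ρ.nodes ρ.len) → E' a (ρ.nodes ρ.len)) : ρ.LastEdge E' := ⟨hρ.1, h _ hρ.2⟩

lemma OpenTo.congr {E E' : V → V → Prop} (hρ : ρ.OpenTo Z E)
    (h : ∀ a, E a (ρ.nodes ρ.len) ↔ E' a (ρ.nodes ρ.len)) : ρ.OpenTo Z E' :=
  ⟨hρ.1, hρ.2.trans ⟨fun hE => hE.mono fun a => (h a).1, fun hE => hE.mono fun a => (h a).2⟩⟩

lemma Pending.lastEdge {p : ℕ} (hp : ρ.Pending p) :
    ρ.LastEdge fun a b => H.und a b ∨ H.solid a b := by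
  obtain ⟨hp1, hp2, hund, hsolid⟩ := hp
  refine ⟨hp1.trans hp2, ?_⟩
  rcases hp2.eq_or_lt with rfl | hlt
  · exact .inr hsolid
  · have hlast := hund (ρ.len - 1) (by omega) (by omega)
    rw [Nat.sub_add_cancel (by omega)] at hlast
    exact .inl hlast

lemma Pending.uconn_last {p : ℕ} (hp : ρ.Pending p) {m : ℕ} (hpm : p ≤ m) (hm : m ≤ ρ.len) :
    H.uconn (ρ.nodes m) (ρ.nodes ρ.len) := by
  induction hm using Nat.decreasingInduction with
  | self => exact .refl
  | of_succ m hm ih => exact .head (hp.2.2.1 m hpm hm) (ih (hpm.trans m.le_succ))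

/-- The last section of the route is entered by a solid arrow, and its nodes are not yet subject to
any requirement. -/
def InSection (Z : Finset V) (ρ : H.Route) : Prop := ∃ p, ρ.Pending p ∧ ρ.OpenBefore Z p

/-- The last section of the route is entered by a solid arrow and meets `Z`, so that it may be left
against a solid arrow. -/
def InMetSection (Z : Finset V) (ρ : H.Route) : Prop :=
  ∃ p, ρ.Pending p ∧ ρ.OpenBefore Z p ∧ ∃ m, p ≤ m ∧ m ≤ ρ.len ∧ ρ.nodes m ∈ Z

/-- The route is open and its last edge, if any, is an arrow pointing away from its last node;
hence it can be continued to an open route by any edge. -/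
def TailOpen (Z : Finset V) (ρ : H.Route) : Prop := ρ.IsZOpen Z ∧ ¬ ρ.LastEdge H.fwd

/-- The route can be continued to an open one against any solid arrow. -/
def SolidOpen (Z : Finset V) (ρ : H.Route) : Prop := ρ.OpenTo Z H.dashed ∧ ∀ p, ¬ ρ.Pending p

lemma InSection.isZOpen (hρ : ρ.InSection Z)
    (hZ : ∀ c, H.uconn c (ρ.nodes ρ.len) → c ∉ Z) : ρ.IsZOpen Z := by
  obtain ⟨p, hp, hopen⟩ := hρ
  refine ⟨hopen.1, hopen.2.1, fun k hk hkn hks => ?_⟩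
  rcases lt_or_ge k p with hkp | hpk
  · exact hopen.2.2 k hkp hkn hks
  · exact hZ _ (hp.uconn_last hpk hk)

lemma InSection.inMetSection (hρ : ρ.InSection Z) (hZ : ρ.nodes ρ.len ∈ Z) :
    ρ.InMetSection Z :=
  let ⟨p, hp, hopen⟩ := hρ
  ⟨p, hp, hopen, _, hp.2.1, le_rfl, hZ⟩

lemma IsZOpen.openTo (hρ : ρ.IsZOpen Z) {E : V → V → Prop} (hE : ¬ ρ.LastEdge E) :
    ρ.OpenTo Z E :=
  ⟨(isZOpen_iff.1 hρ).1, iff_of_false (isZOpen_iff.1 hρ).2 hE⟩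

lemma IsZOpen.inSection (hρ : ρ.IsZOpen Z) {p : ℕ} (hp : ρ.Pending p) : ρ.InSection Z :=
  ⟨p, hp, hρ.1, hρ.2.1, fun k hk => hρ.2.2 k (hk.le.trans hp.2.1)⟩

lemma TailOpen.solidOpen (hρ : ρ.TailOpen Z) : ρ.SolidOpen Z :=
  ⟨hρ.1.openTo fun hE => hρ.2 (hE.mono fun _ h => .inr (.inr h)), fun _ hp =>
    hρ.2 (hp.lastEdge.mono fun _ h => h.imp_right .inl)⟩

lemma tailOpen_single {v : V} (hv : v ∉ Z) : (single H v).TailOpen Z :=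
  ⟨isZOpen_iff.2 ⟨openBefore_single v, hv⟩, fun h => absurd h.1 (Nat.not_succ_le_zero 0)⟩

lemma IsZOpen.snoc (hρ : (ρ : H.Route).IsZOpen Z) (h : H.adj (ρ.nodes ρ.len) w)
    (hcollider : ∀ a, ¬ H.colliderTriple a (ρ.nodes ρ.len) w) (hw : ¬ H.solid w (ρ.nodes ρ.len)) :
    (ρ.snoc w h).OpenBefore Z (ρ.snoc w h).len :=
  OpenTo.snoc h (hρ.openTo fun hE => hcollider _ hE.2) fun _ _ hsolid => absurd hsolid hw

end Route

end PreGraph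

namespace ChainGraph

variable {G : ChainGraph V} {a b c : V}

lemma not_solid_of_und (h : G.und a b) : ¬ G.solid a b ∧ ¬ G.solid b a := by
  have hab : G.undir a b := h.elim id (G.undir_symm _ _)
  exact ⟨G.undir_not_solid _ _ hab, G.undir_not_solid _ _ (G.undir_symm _ _ hab)⟩

lemma not_dashed_of_und (h : G.und a b) : ¬ G.dashed a b ∧ ¬ G.dashed b a := by
  have hab : G.undir a b := h.elim id (G.undir_symm _ _)
  exact ⟨G.undir_not_dashed _ _ hab, G.undir_not_dashed _ _ (G.undir_symm _ _ hab)⟩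

lemma not_fwd_of_arrow (h : G.solid a b ∨ G.dashed a b) : ¬ G.fwd b a := by
  have := G.solid_not_solid a b
  have := G.solid_not_dashed_rev a b
  have := G.solid_not_dashed_rev b a
  have := G.dashed_not_dashed a b
  have := @not_solid_of_und V G b a
  have := @not_dashed_of_und V G b a
  unfold PreGraph.fwd
  tauto

lemma colliderTriple_iff_of_und (h : G.und c b) : G.colliderTriple a c b ↔ G.dashed a c := by
  have := not_solid_of_und h
  have := not_dashed_of_und h
  unfold PreGraph.colliderTriple
  tauto

lemma colliderTriple_iff_of_solid (h : G.solid b c) : G.colliderTriple a c b ↔ G.dashed a c := by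
  have := G.solid_not_dashed b c
  have := @not_solid_of_und V G c b
  unfold PreGraph.colliderTriple
  tauto

lemma colliderTriple_iff_of_dashed (h : G.dashed b c) : G.colliderTriple a c b ↔ G.fwd a c := by
  have := G.solid_not_dashed b c
  have := @not_dashed_of_und V G c b
  unfold PreGraph.colliderTriple PreGraph.fwd
  tauto

lemma not_colliderTriple_of_arrow (h : G.solid c b ∨ G.dashed c b) :
    ¬ G.colliderTriple a c b := by
  have := not_fwd_of_arrow h
  unfold PreGraph.fwd PreGraph.und at this
  unfold PreGraph.colliderTriple PreGraph.und
  tauto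

end ChainGraph

end Routes

section Reachability

namespace PreGraph

variable {H : PreGraph V} {X Y Z U : Finset V} {v w : V}

namespace Route

variable {ρ : H.Route} {E E' : V → V → Prop}

/-- The route is open up to its last node, which it enters by an edge satisfying `E`. -/
def OpenVia (Z : Finset V) (E : V → V → Prop) (ρ : H.Route) : Prop :=
  ρ.OpenBefore Z ρ.len ∧ ρ.LastEdge E

lemma OpenVia.isZOpen (hρ : ρ.OpenVia Z E) (hZ : ρ.nodes ρ.len ∉ Z) : ρ.IsZOpen Z :=
  isZOpen_iff.2 ⟨hρ.1, hZ⟩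

lemma OpenVia.openTo_of_mem (hρ : ρ.OpenVia Z E) (hZ : ρ.nodes ρ.len ∈ Z)
    (hE : ∀ a, E a (ρ.nodes ρ.len) → E' a (ρ.nodes ρ.len)) : ρ.OpenTo Z E' :=
  ⟨hρ.1, iff_of_true hZ (hρ.2.mono hE)⟩

lemma OpenVia.openTo_of_notMem (hρ : ρ.OpenVia Z E) (hZ : ρ.nodes ρ.len ∉ Z)
    (hE : ∀ a, E a (ρ.nodes ρ.len) → ¬ E' a (ρ.nodes ρ.len)) : ρ.OpenTo Z E' :=
  ⟨hρ.1, iff_of_false hZ fun h => hE _ hρ.2.2 h.2⟩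

lemma OpenTo.isZOpen (hρ : ρ.OpenTo Z E) (hZ : ρ.nodes ρ.len ∉ Z) : ρ.IsZOpen Z :=
  isZOpen_iff.2 ⟨hρ.1, hZ⟩

lemma TailOpen.openTo (hρ : ρ.TailOpen Z) (hE : ∀ a b, E a b → H.fwd a b) : ρ.OpenTo Z E :=
  hρ.1.openTo fun h => hρ.2 (h.mono fun a => hE a _)

end Route

/-- Some route with property `P` leads from a node of `X` to `v`. -/
def Reaches (X : Finset V) (P : H.Route → Prop) (v : V) : Prop :=
  ∃ ρ : H.Route, ρ.nodes 0 ∈ X ∧ ρ.nodes ρ.len = v ∧ P ρ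

namespace Reaches

variable {P P' : H.Route → Prop}

lemma snoc (hv : Reaches X P v) (hadj : H.adj v w)
    (hP : ∀ ρ : H.Route, ρ.nodes ρ.len = v → P ρ → ∀ h, P' (ρ.snoc w h)) : Reaches X P' w := by
  obtain ⟨ρ, hX, rfl, hρ⟩ := hv
  exact ⟨ρ.snoc w hadj, hX, Route.snoc_nodes_last hadj, hP ρ rfl hρ hadj⟩

lemma mono (hv : Reaches X P v) (hP : ∀ ρ : H.Route, ρ.nodes ρ.len = v → P ρ → P' ρ) :
    Reaches X P' v :=
  let ⟨ρ, hX, hρv, hρ⟩ := hv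
  ⟨ρ, hX, hρv, hP ρ hρv hρ⟩

lemma notMem (hv : H.Reaches X (Route.IsZOpen · Z) v) : v ∉ Z := by
  obtain ⟨ρ, -, rfl, hρ⟩ := hv
  exact (Route.isZOpen_iff.1 hρ).2

end Reaches

lemma Sep.not_reaches (hsep : H.Sep X Y Z) (hv : v ∈ Y) :
    ¬ H.Reaches X (Route.IsZOpen · Z) v :=
  fun ⟨ρ, hX, hρv, hρ⟩ => hsep ⟨ρ, .inl ⟨hX, hρv ▸ hv⟩, hρ⟩

lemma reaches_tailOpen_of_mem (hX : v ∈ X) (hZ : v ∉ Z) : H.Reaches X (Route.TailOpen Z) v :=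
  ⟨.single H v, hX, rfl, Route.tailOpen_single hZ⟩

lemma und_symm (h : H.und v w) : H.und w v := Or.symm h

lemma uconn_symm (h : H.uconn v w) : H.uconn w v :=
  have : Std.Symm H.und := ⟨fun _ _ => und_symm⟩
  Relation.ReflTransGen.stdSymm.symm _ _ h

/-- The nodes whose equation in the recursive representation of the distribution is relevant for
its marginal on `U`. -/
inductive Relevant (G : PreGraph V) (U : Finset V) : V → Prop
  | base {a : V} : a ∈ U → Relevant G U a
  | dashed {a b : V} : G.dashed a b → Relevant G U b → Relevant G U a
  | solid {a c b : V} : G.solid a c → G.uconn c b → Relevant G U b → Relevant G U a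

variable (H) in
/-- The nodes whose chain component contains a relevant node. -/
def CompRelevant (U : Finset V) (k : V) : Prop := ∃ w, H.uconn k w ∧ H.Relevant U w

variable (H) in
/-- The node is reached from `X` by a route that stays open up to its last node when it is continued
along an undirected edge. These labels split the precision matrix of the reduced system into two
blocks. -/
def Labelled (X Z : Finset V) (k : V) : Prop := H.Reaches X (Route.OpenTo Z H.dashed) k

variable (H) in
/-- The node or one of its mothers lies outside `Z`: its equation still involves a variable once
the variables in `Z` are fixed. -/
def Nonconst (Z : Finset V) (k : V) : Prop := k ∉ Z ∨ ∃ m, m ∉ Z ∧ H.dashed m k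

lemma CompRelevant.of_uconn (h : H.CompRelevant U v) (hvw : H.uconn v w) : H.CompRelevant U w :=
  let ⟨u, hu, hU⟩ := h
  ⟨u, (uconn_symm hvw).trans hu, hU⟩

lemma Relevant.compRelevant (h : H.Relevant U v) : H.CompRelevant U v := ⟨v, .refl, h⟩

end PreGraph

namespace ChainGraph

open PreGraph

variable {G : ChainGraph V} {X Y Z : Finset V} {k l m v w f f' : V}

lemma not_dashed_of_und_or_solid (h : G.und v w ∨ G.solid v w) : ¬ G.dashed v w :=
  h.elim (fun h => (not_dashed_of_und h).1) (G.solid_not_dashed _ _)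

lemma le_of_pending_of_pending {ρ : G.Route} {p q : ℕ} (hq : ρ.Pending q)
    (hp : ρ.Pending p) : q ≤ p := by
  by_contra! hlt
  have hund := hp.2.2.1 (q - 1) (by omega) (by have := hq.2.1; omega)
  rw [Nat.sub_add_cancel hq.1] at hund
  exact (not_solid_of_und hund).1 hq.2.2.2

lemma reaches_openVia_of_dashed (hv : G.Reaches X (Route.IsZOpen · Z) v) (h : G.dashed v w) :
    G.Reaches X (Route.OpenVia Z G.dashed) w := by
  refine hv.snoc (by unfold adj; tauto) ?_
  rintro ρ rfl hρ hadj
  exact ⟨hρ.snoc hadj (fun _ => not_colliderTriple_of_arrow (.inr h))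
    fun hw => not_fwd_of_arrow (.inr h) (.inr (.inl hw)), (Route.lastEdge_snoc hadj).2 h⟩

lemma reaches_openVia_of_solid (hv : G.Reaches X (Route.IsZOpen · Z) v) (h : G.solid v w) :
    G.Reaches X (fun ρ => ρ.OpenVia Z G.solid ∧ ρ.InSection Z) w := by
  refine hv.snoc (by unfold adj; tauto) ?_
  rintro ρ rfl hρ hadj
  have hopen := hρ.snoc hadj (fun _ => not_colliderTriple_of_arrow (.inl h))
    fun hw => G.solid_not_solid _ _ h hw
  exact ⟨⟨hopen, (Route.lastEdge_snoc hadj).2 h⟩, _,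
    (Route.pending_snoc hadj _).2 (.inr ⟨rfl, h⟩), hopen⟩

lemma reaches_openVia_of_und (hv : G.Reaches X (Route.OpenTo Z G.dashed) v) (h : G.und v w) :
    G.Reaches X (Route.OpenVia Z G.und) w := by
  refine hv.snoc (.inl h) ?_
  rintro ρ rfl hρ hadj
  exact ⟨Route.OpenTo.snoc hadj (hρ.congr fun _ => (colliderTriple_iff_of_und h).symm)
    fun _ _ hw => absurd hw (not_solid_of_und h).2, (Route.lastEdge_snoc hadj).2 h⟩

lemma tailOpen_snoc {ρ : G.Route} {hadj : G.adj (ρ.nodes ρ.len) w}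
    (hρ : (ρ.snoc w hadj).OpenBefore Z (ρ.snoc w hadj).len) (hw : w ∉ Z)
    (h : G.solid w (ρ.nodes ρ.len) ∨ G.dashed w (ρ.nodes ρ.len)) :
    (ρ.snoc w hadj).TailOpen Z :=
  ⟨Route.isZOpen_iff.2 ⟨hρ, by rwa [Route.snoc_len, Route.snoc_nodes_last]⟩,
    fun hE => not_fwd_of_arrow h ((Route.lastEdge_snoc hadj).1 hE)⟩

lemma reaches_tailOpen_of_mother (hv : G.Reaches X (Route.OpenTo Z G.fwd) v) (h : G.dashed m v)
    (hm : m ∉ Z) : G.Reaches X (Route.TailOpen Z) m := by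
  refine hv.snoc (by unfold adj; tauto) ?_
  rintro ρ rfl hρ hadj
  exact tailOpen_snoc
    (Route.OpenTo.snoc hadj (hρ.congr fun _ => (colliderTriple_iff_of_dashed h).symm)
      fun _ _ hw => absurd h (G.solid_not_dashed _ _ hw)) hm (.inr h)

lemma reaches_tailOpen_of_father (hv : G.Reaches X (Route.SolidOpen Z) v) (h : G.solid f v)
    (hf : f ∉ Z) : G.Reaches X (Route.TailOpen Z) f := by
  refine hv.snoc (by unfold adj; tauto) ?_
  rintro ρ rfl hρ hadj
  exact tailOpen_snoc
    (Route.OpenTo.snoc hadj (hρ.1.congr fun _ => (colliderTriple_iff_of_solid h).symm)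
      fun p hp _ => absurd hp (hρ.2 p)) hf (.inl h)

lemma reaches_tailOpen_of_inMetSection (hv : G.Reaches X (Route.InMetSection Z) v)
    (h : G.solid f v) (hf : f ∉ Z) : G.Reaches X (Route.TailOpen Z) f := by
  refine hv.snoc (by unfold adj; tauto) ?_
  rintro ρ rfl ⟨p, hp, hopen, m, hpm, hm, hmZ⟩ hadj
  refine tailOpen_snoc (hopen.snoc hadj le_rfl (fun hlast => ?_)
    (fun p' hp' _ => ⟨m, le_trans ?_ hpm, hm, hmZ⟩) fun k hpk hk _ => .inr ?_) hf (.inl h)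
  · exact absurd ((colliderTriple_iff_of_solid h).1 hlast.2)
      (not_dashed_of_und_or_solid hp.lastEdge.2)
  · exact le_of_pending_of_pending hp' hp
  · exact ⟨p, ρ.len, (Route.colliderSectionOcc_snoc hadj _ _).2 (.inr ⟨rfl, hp, h⟩), hpk,
      Nat.lt_succ_iff.1 hk⟩

lemma openBefore_snoc_of_pending {ρ : G.Route} {p : ℕ} (hp : ρ.Pending p)
    (hρ : ρ.OpenBefore Z p) (h : G.und (ρ.nodes ρ.len) w) :
    (ρ.snoc w (.inl h)).OpenBefore Z p :=
  hρ.snoc _ (hp.2.1.trans ρ.len.le_succ) (fun hlast => absurd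
      ((colliderTriple_iff_of_und h).1 hlast.2) (not_dashed_of_und_or_solid hp.lastEdge.2))
    (fun _ _ hw => absurd hw (not_solid_of_und h).2) fun _ hk hk' => absurd hk hk'.not_ge

lemma reaches_inSection_of_uconn (hv : G.Reaches X (Route.InSection Z) v) (h : G.uconn v w) :
    G.Reaches X (Route.InSection Z) w := by
  induction h with
  | refl => exact hv
  | tail _ hund ih =>
    refine ih.snoc (.inl hund) ?_
    rintro ρ rfl ⟨p, hp, hopen⟩ hadj
    exact ⟨p, (Route.pending_snoc hadj p).2 (.inl ⟨hp, hund⟩),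
      openBefore_snoc_of_pending hp hopen hund⟩

lemma reaches_inMetSection_of_uconn (hv : G.Reaches X (Route.InMetSection Z) v)
    (h : G.uconn v w) : G.Reaches X (Route.InMetSection Z) w := by
  induction h with
  | refl => exact hv
  | tail _ hund ih =>
    refine ih.snoc (.inl hund) ?_
    rintro ρ rfl ⟨p, hp, hopen, m, hpm, hm, hmZ⟩ hadj
    exact ⟨p, (Route.pending_snoc hadj p).2 (.inl ⟨hp, hund⟩),
      openBefore_snoc_of_pending hp hopen hund, m, hpm, hm.trans ρ.len.le_succ,
      by rwa [Route.snoc_nodes_of_le hadj hm]⟩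

lemma reaches_solidOpen_of_uconn (hv : G.Reaches X (Route.SolidOpen Z) v) (h : G.uconn v w)
    (hZ : ∀ c, G.uconn v c → c ∉ Z) : G.Reaches X (Route.SolidOpen Z) w := by
  induction h with
  | refl => exact hv
  | tail hcomp hund ih =>
    refine ih.snoc (.inl hund) ?_
    rintro ρ rfl ⟨hρ, hpend⟩ hadj
    have hvia : (ρ.snoc _ hadj).OpenVia Z G.und :=
      ⟨Route.OpenTo.snoc hadj (hρ.congr fun _ => (colliderTriple_iff_of_und hund).symm)
        fun _ _ hw => absurd hw (not_solid_of_und hund).2, (Route.lastEdge_snoc hadj).2 hund⟩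
    refine ⟨hvia.openTo_of_notMem ?_ fun _ h => (not_dashed_of_und h).1, fun p hp => ?_⟩
    · rw [Route.snoc_len, Route.snoc_nodes_last]
      exact hZ _ (hcomp.tail hund)
    · rcases (Route.pending_snoc hadj p).1 hp with ⟨hp, -⟩ | ⟨-, hsolid⟩
      exacts [hpend p hp, (not_solid_of_und hund).1 hsolid]

lemma reaches_dashed_of_mem (hv : G.Reaches X (Route.IsZOpen · Z) v) (h : G.dashed v w)
    (hw : w ∈ Z) : G.Reaches X (fun ρ => ρ.OpenTo Z G.dashed ∧ ρ.OpenTo Z G.fwd) w := by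
  refine (reaches_openVia_of_dashed hv h).mono ?_
  rintro ρ rfl hρ
  exact ⟨hρ.openTo_of_mem hw fun _ => id, hρ.openTo_of_mem hw fun _ h => .inr (.inr h)⟩

/-- A route that has entered a chain component through a solid arrow leaves it against any solid
arrow: either the component meets `Z`, so that the section spent in it may be prolonged to a
collider section meeting `Z`, or the route can be turned around at `w` without restriction. -/
lemma reaches_tailOpen_of_inSection {k' : V} (hk : G.Reaches X (Route.InSection Z) k)
    (hkw : G.uconn k w)
    (hw : G.Reaches X (Route.IsZOpen · Z) w → G.Reaches X (Route.TailOpen Z) w)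
    (hkk' : G.uconn k k') (hf : G.solid f k') (hfZ : f ∉ Z) :
    G.Reaches X (Route.TailOpen Z) f := by
  by_cases hZ : ∀ c, G.uconn k c → c ∉ Z
  · have hopen : G.Reaches X (Route.IsZOpen · Z) w := by
      refine (reaches_inSection_of_uconn hk hkw).mono ?_
      rintro ρ rfl hρ
      exact hρ.isZOpen fun c hc => hZ c (hkw.trans (uconn_symm hc))
    refine reaches_tailOpen_of_father (reaches_solidOpen_of_uconn ((hw hopen).mono
      fun _ _ hρ => hρ.solidOpen) ((uconn_symm hkw).trans hkk') fun c hc => ?_) hf hfZ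
    exact hZ c (hkw.trans hc)
  · push Not at hZ
    obtain ⟨z, hkz, hzZ⟩ := hZ
    have hmet : G.Reaches X (Route.InMetSection Z) z := by
      refine (reaches_inSection_of_uconn hk hkz).mono ?_
      rintro ρ rfl hρ
      exact hρ.inMetSection hzZ
    exact reaches_tailOpen_of_inMetSection
      (reaches_inMetSection_of_uconn hmet ((uconn_symm hkz).trans hkk')) hf hfZ

lemma labelled_of_mother (hk : G.Reaches X (Route.OpenTo Z G.fwd) k) (hkZ : k ∈ Z)
    (hm : m ∉ Z) (h : G.dashed m k) : G.Labelled X Z k :=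
  (reaches_dashed_of_mem ((reaches_tailOpen_of_mother hk h hm).mono fun _ _ hρ => hρ.1) h
    hkZ).mono fun _ _ hρ => hρ.1

lemma labelled_of_und (h : G.und k l) (hk : G.Labelled X Z k) (hl : G.Nonconst Z l) :
    G.Labelled X Z l := by
  have hvia := reaches_openVia_of_und hk h
  by_cases hlZ : l ∈ Z
  · obtain ⟨m, hm, hml⟩ := hl.resolve_left (not_not_intro hlZ)
    refine labelled_of_mother (hvia.mono ?_) hlZ hm hml
    rintro ρ rfl hρ
    exact hρ.openTo_of_mem hlZ fun _ => .inl
  · refine hvia.mono ?_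
    rintro ρ rfl hρ
    exact hρ.openTo_of_notMem hlZ fun _ h => (not_dashed_of_und h).1

lemma labelled_of_tailOpen (hv : G.Reaches X (Route.TailOpen Z) v) : G.Labelled X Z v :=
  hv.mono fun _ _ hρ => hρ.openTo fun _ _ h => .inr (.inr h)

variable [DecidableEq V]

/-- Relevant nodes are those from which `X ∪ Y ∪ Z` can be reached along arrows and, after a solid
arrow, undirected edges: an open route follows such a path until it meets `Z`, and then returns. -/
lemma reaches_tailOpen_of_relevant (hsep : G.Sep X Y Z) (hv : G.Relevant (X ∪ Y ∪ Z) v)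
    (hopen : G.Reaches X (Route.IsZOpen · Z) v) : G.Reaches X (Route.TailOpen Z) v := by
  induction hv with
  | base hv =>
    simp only [Finset.mem_union] at hv
    obtain (hv | hv) | hv := hv
    · exact reaches_tailOpen_of_mem hv hopen.notMem
    · exact absurd hopen (hsep.not_reaches hv)
    · exact absurd hv hopen.notMem
  | @dashed v w hvw _ ih =>
    refine reaches_tailOpen_of_mother ?_ hvw hopen.notMem
    by_cases hw : w ∈ Z
    · exact (reaches_dashed_of_mem hopen hvw hw).mono fun _ _ hρ => hρ.2
    · refine (ih ((reaches_openVia_of_dashed hopen hvw).mono ?_)).mono fun _ _ hρ =>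
        hρ.openTo fun _ _ => id
      rintro ρ rfl hρ
      exact hρ.isZOpen hw
  | solid hvc hcw _ ih =>
    exact reaches_tailOpen_of_inSection ((reaches_openVia_of_solid hopen hvc).mono
      fun _ _ hρ => hρ.2) hcw ih .refl hvc hopen.notMem

lemma reaches_tailOpen_iff_labelled (hsep : G.Sep X Y Z) (hk : G.Relevant (X ∪ Y ∪ Z) k)
    (hkZ : k ∉ Z) : G.Reaches X (Route.TailOpen Z) k ↔ G.Labelled X Z k := by
  refine ⟨labelled_of_tailOpen, fun h => reaches_tailOpen_of_relevant hsep hk (h.mono ?_)⟩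
  rintro ρ rfl hρ
  exact hρ.isZOpen hkZ

lemma labelled_iff_of_dashed (hsep : G.Sep X Y Z) (hmk : G.dashed m k)
    (hk : G.Relevant (X ∪ Y ∪ Z) k) (hm : m ∉ Z) :
    G.Reaches X (Route.TailOpen Z) m ↔ G.Labelled X Z k := by
  by_cases hkZ : k ∈ Z
  · refine ⟨fun h => (reaches_dashed_of_mem (h.mono fun _ _ hρ => hρ.1) hmk hkZ).mono
      fun _ _ hρ => hρ.1, fun h => reaches_tailOpen_of_mother (h.mono ?_) hmk hm⟩
    rintro ρ rfl ⟨hopen, hlast⟩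
    exact ⟨hopen, iff_of_true hkZ ((hlast.1 hkZ).mono fun _ h => .inr (.inr h))⟩
  · rw [← reaches_tailOpen_iff_labelled hsep hk hkZ]
    refine ⟨fun h => reaches_tailOpen_of_relevant hsep hk ((reaches_openVia_of_dashed
      (h.mono fun _ _ hρ => hρ.1) hmk).mono ?_), fun h => reaches_tailOpen_of_mother
        (h.mono fun _ _ hρ => hρ.openTo fun _ _ => id) hmk hm⟩
    rintro ρ rfl hρ
    exact hρ.isZOpen hkZ

lemma labelled_iff_of_solid (hsep : G.Sep X Y Z) (hfk : G.solid f k)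
    (hk : G.CompRelevant (X ∪ Y ∪ Z) k) (hf : f ∉ Z) (hnc : G.Nonconst Z k) :
    G.Reaches X (Route.TailOpen Z) f ↔ G.Labelled X Z k := by
  constructor
  · intro h
    have hvia := reaches_openVia_of_solid (h.mono fun _ _ hρ => hρ.1) hfk
    by_cases hkZ : k ∈ Z
    · obtain ⟨m, hm, hmk⟩ := hnc.resolve_left (not_not_intro hkZ)
      refine labelled_of_mother (hvia.mono ?_) hkZ hm hmk
      rintro ρ rfl ⟨hρ, -⟩
      exact hρ.openTo_of_mem hkZ fun _ h => .inr (.inl h)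
    · refine hvia.mono ?_
      rintro ρ rfl ⟨hρ, -⟩
      exact hρ.openTo_of_notMem hkZ fun _ => G.solid_not_dashed _ _
  · rintro ⟨ρ, hX, rfl, hρ⟩
    by_cases hpend : ∃ p, ρ.Pending p
    · obtain ⟨p, hp⟩ := hpend
      obtain ⟨w, hkw, hw⟩ := hk
      have hkZ : ρ.nodes ρ.len ∉ Z := fun h =>
        not_dashed_of_und_or_solid hp.lastEdge.2 (hρ.2.1 h).2
      exact reaches_tailOpen_of_inSection ⟨ρ, hX, rfl, (hρ.isZOpen hkZ).inSection hp⟩ hkw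
        (reaches_tailOpen_of_relevant hsep hw) .refl hfk hf
    · exact reaches_tailOpen_of_father ⟨ρ, hX, rfl, hρ, not_exists.1 hpend⟩ hfk hf

lemma reaches_tailOpen_of_fathers {k' : V} (hsep : G.Sep X Y Z) (hfk : G.solid f k)
    (hfk' : G.solid f' k') (hkk' : G.uconn k k') (hk : G.CompRelevant (X ∪ Y ∪ Z) k)
    (hf' : f' ∉ Z) (h : G.Reaches X (Route.TailOpen Z) f) :
    G.Reaches X (Route.TailOpen Z) f' :=
  let ⟨_, hkw, hw⟩ := hk
  reaches_tailOpen_of_inSection ((reaches_openVia_of_solid (h.mono fun _ _ hρ => hρ.1) hfk).mono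
    fun _ _ hρ => hρ.2) hkw (reaches_tailOpen_of_relevant hsep hw) hkk' hfk' hf'

end ChainGraph

end Reachability

section RecursiveSystems

variable {R : Type*} [CommRing R]

/-- The matrix `M` with the rows whose index does not satisfy `W` replaced by zero. -/
def keepRows (W : V → Prop) (M : Matrix V V R) : Matrix V V R :=
  Matrix.of fun k j => if W k then M k j else 0

lemma keepRows_apply_ne_zero {W : V → Prop} {M : Matrix V V R} {k j : V} :
    keepRows W M k j ≠ 0 ↔ W k ∧ M k j ≠ 0 := by
  simp [keepRows]

lemma keepRows_of {W : V → Prop} (M : Matrix V V R) {k : V} (h : W k) :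
    keepRows W M k = M k := funext fun _ => if_pos h

variable [Fintype V]

lemma exists_ne_zero_of_mul_apply_ne_zero {M N : Matrix V V R} {i j : V} (h : (M * N) i j ≠ 0) :
    ∃ k, M i k ≠ 0 ∧ N k j ≠ 0 := by
  rw [Matrix.mul_apply] at h
  obtain ⟨k, -, hk⟩ := Finset.exists_ne_zero_of_sum_ne_zero h
  exact ⟨k, left_ne_zero_of_mul hk, right_ne_zero_of_mul hk⟩

variable [DecidableEq V] {b b' : Matrix V V R} {π : V → ℕ} {W : V → Prop} {u v g : V → R}

lemma eqOn_of_one_sub_mulVec_eqOn (hb : ∀ k, W k → ∀ j, b k j ≠ 0 → π j < π k ∧ W j)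
    (h : ∀ k, W k → ((1 - b) *ᵥ u) k = ((1 - b) *ᵥ v) k) {k : V} (hk : W k) : u k = v k := by
  induction hn : π k using Nat.strong_induction_on generalizing k with
  | _ n ih =>
    subst hn
    have hsum : (b *ᵥ u) k = (b *ᵥ v) k := Finset.sum_congr rfl fun j _ => by
      by_cases hj : b k j = 0
      · simp only [hj, zero_mul]
      · obtain ⟨hlt, hW⟩ := hb k hk j hj
        rw [ih _ hlt hW rfl]
    simpa [Matrix.sub_mulVec, hsum] using h k hk

lemma one_sub_mulVec_injective (hb : ∀ k j, b k j ≠ 0 → π j < π k) :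
    Function.Injective (1 - b).mulVec := fun _ _ h =>
  funext fun _ => eqOn_of_one_sub_mulVec_eqOn (W := fun _ => True)
    (fun _ _ j hj => ⟨hb _ j hj, trivial⟩) (fun k _ => congrFun h k) trivial

/-- Two recursive systems with the same errors and the same equations on a closed set `W` of
nodes have the same marginal distribution on `W`: if `b'` uses only the variables in `W`, the
precision matrix of the system `b'` may be used as if it were the inverse of `S`. -/
lemma vecMul_eqOn_of_recursive {S L : Matrix V V R} (hL : IsUnit L.det)
    (hcov : (1 - b) * S * (1 - b)ᵀ = L)
    (hb : ∀ k, W k → ∀ j, b k j ≠ 0 → π j < π k ∧ W j)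
    (hb' : ∀ k j, b' k j ≠ 0 → W j) (hrow : ∀ k, W k → b' k = b k)
    (hg : ∀ k, ¬ W k → (g ᵥ* ((1 - b')ᵀ * L⁻¹ * (1 - b'))) k = 0) {k : V} (hk : W k) :
    ((g ᵥ* ((1 - b')ᵀ * L⁻¹ * (1 - b'))) ᵥ* S) k = g k := by
  set c := g ᵥ* ((1 - b')ᵀ * L⁻¹ * (1 - b')) with hc
  set s := g ᵥ* ((1 - b')ᵀ * L⁻¹) with hs
  have hsc : s ᵥ* (1 - b') = c := by rw [hs, hc, Matrix.vecMul_vecMul]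
  have hs_support : ∀ k, ¬ W k → s k = 0 := fun k hk => by
    have hsb : (s ᵥ* b') k = 0 := Finset.sum_eq_zero fun i _ =>
      mul_eq_zero_of_right _ (by_contra fun hne => hk (hb' i k hne))
    simpa [Matrix.vecMul_sub, hsb, ← hsc] using hg k hk
  have hsb : s ᵥ* b' = s ᵥ* b := funext fun v => Finset.sum_congr rfl fun i _ => by
    by_cases hi : W i
    · exact congrArg (s i * · v) (hrow i hi)
    · rw [hs_support i hi, zero_mul, zero_mul]
  have hNc : (1 - b) *ᵥ (c ᵥ* S) = (1 - b') *ᵥ g := by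
    rw [← hsc, Matrix.vecMul_sub, hsb, ← Matrix.vecMul_sub, ← Matrix.vecMul_transpose,
      Matrix.vecMul_vecMul, Matrix.vecMul_vecMul, ← Matrix.mul_assoc, hcov, hs,
      Matrix.vecMul_vecMul, Matrix.mul_assoc, Matrix.nonsing_inv_mul L hL, Matrix.mul_one,
      Matrix.vecMul_transpose]
  refine eqOn_of_one_sub_mulVec_eqOn hb (fun k hk => ?_) hk
  rw [hNc, Matrix.sub_mulVec, Matrix.sub_mulVec, Pi.sub_apply, Pi.sub_apply]
  exact congrArg (_ - · ⬝ᵥ g) (hrow k hk)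

end RecursiveSystems

section RecursiveRepresentation

open PreGraph ChainGraph

/-- The coefficients of the reduced system, in which the equations irrelevant for the marginal on
`U` are dropped: the dashed part is kept for the relevant nodes, the solid part for their whole
chain components. -/
def reducedCoef (G : PreGraph V) (U : Finset V) (B F : Matrix V V ℝ) : Matrix V V ℝ :=
  keepRows (G.Relevant U) B + keepRows (G.CompRelevant U) F

lemma reducedCoef_of_relevant {G : PreGraph V} {U : Finset V} (B F : Matrix V V ℝ) {k : V}
    (hk : G.Relevant U k) : reducedCoef G U B F k = (B + F) k :=
  congrArg₂ (· + ·) (keepRows_of B hk) (keepRows_of F hk.compRelevant)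

variable [Fintype V] [DecidableEq V]

/-- `N(0, S)` is the distribution of the solution `v` of the linear system `v = (B + F) v + e` with
errors `e` distributed as `N(0, L)`, where `B` follows the dashed arrows of `G` while `F` follows
the solid ones only after multiplication by the precision matrix `L⁻¹` of the errors. -/
structure IsRecursiveRep (G : PreGraph V) (S L B F : Matrix V V ℝ) : Prop where
  posDef : L.PosDef
  cov : (1 - (B + F)) * S * (1 - (B + F))ᵀ = L
  und_of_ne : ∀ k l, L⁻¹ k l ≠ 0 → k = l ∨ G.und k l
  uconn_of_ne : ∀ k l, L k l ≠ 0 → G.uconn k l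
  dashed_of_ne : ∀ k j, B k j ≠ 0 → G.dashed j k
  solid_of_ne : ∀ k j, (L⁻¹ * F) k j ≠ 0 → G.solid j k

/-- The precision matrix of the solution of the reduced system. -/
def reducedPrec (G : PreGraph V) (U : Finset V) (L B F : Matrix V V ℝ) : Matrix V V ℝ :=
  (1 - reducedCoef G U B F)ᵀ * L⁻¹ * (1 - reducedCoef G U B F)

namespace IsRecursiveRep

variable {G : ChainGraph V} {S L B F : Matrix V V ℝ} {U : Finset V} {π : V → ℕ} {k j : V}

lemma isUnit_det {G : PreGraph V} (h : IsRecursiveRep G S L B F) : IsUnit L.det :=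
  (Matrix.isUnit_iff_isUnit_det _).1 h.posDef.isUnit

lemma exists_solid {G : PreGraph V} (h : IsRecursiveRep G S L B F) (hkj : F k j ≠ 0) :
    ∃ l, G.uconn k l ∧ G.solid j l := by
  rw [← Matrix.mul_nonsing_inv_cancel_left L F h.isUnit_det] at hkj
  obtain ⟨l, hkl, hlj⟩ := exists_ne_zero_of_mul_apply_ne_zero hkj
  exact ⟨l, h.uconn_of_ne _ _ hkl, h.solid_of_ne _ _ hlj⟩

lemma lt_and_relevant_of_ne {G : PreGraph V} (h : IsRecursiveRep G S L B F)
    (hπ : G.IsTopoOrder π) (hk : G.Relevant U k) (hkj : (B + F) k j ≠ 0) :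
    π j < π k ∧ G.Relevant U j := by
  by_cases hB : B k j = 0
  · rw [Matrix.add_apply, hB, zero_add] at hkj
    obtain ⟨l, hkl, hjl⟩ := h.exists_solid hkj
    exact ⟨hπ.1 k l hkl ▸ hπ.2 j l (.inl hjl), .solid hjl (uconn_symm hkl) hk⟩
  · have hjk := h.dashed_of_ne k j hB
    exact ⟨hπ.2 j k (.inr hjk), .dashed hjk hk⟩

lemma lt_and_relevant_of_reducedCoef_ne {G : PreGraph V} (h : IsRecursiveRep G S L B F)
    (hπ : G.IsTopoOrder π) (hkj : reducedCoef G U B F k j ≠ 0) :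
    π j < π k ∧ G.Relevant U j := by
  by_cases hB : keepRows (G.Relevant U) B k j = 0
  · rw [reducedCoef, Matrix.add_apply, hB, zero_add] at hkj
    obtain ⟨hk, hF⟩ := keepRows_apply_ne_zero.1 hkj
    obtain ⟨l, hkl, hjl⟩ := h.exists_solid hF
    obtain ⟨w, hlw, hw⟩ := hk.of_uconn hkl
    exact ⟨hπ.1 k l hkl ▸ hπ.2 j l (.inl hjl), .solid hjl hlw hw⟩
  · obtain ⟨hk, hB⟩ := keepRows_apply_ne_zero.1 hB
    have hjk := h.dashed_of_ne k j hB
    exact ⟨hπ.2 j k (.inr hjk), .dashed hjk hk⟩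

lemma reducedPrec_posDef {G : PreGraph V} (h : IsRecursiveRep G S L B F) (hπ : G.IsTopoOrder π) :
    (reducedPrec G U L B F).PosDef := by
  rw [reducedPrec, ← Matrix.conjTranspose_eq_transpose_of_trivial]
  exact h.posDef.inv.conjTranspose_mul_mul_same
    (one_sub_mulVec_injective fun _ _ hkj => (h.lt_and_relevant_of_reducedCoef_ne hπ hkj).1)

lemma compRelevant_and_solid_of_ne {G : PreGraph V} (h : IsRecursiveRep G S L B F)
    (hkj : (L⁻¹ * keepRows (G.CompRelevant U) F) k j ≠ 0) : G.CompRelevant U k ∧ G.solid j k := by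
  have hiff : ∀ l, L⁻¹ k l ≠ 0 → (G.CompRelevant U l ↔ G.CompRelevant U k) := fun l hl => by
    rcases h.und_of_ne k l hl with rfl | hl
    · rfl
    · exact ⟨fun hl' => hl'.of_uconn (.single (und_symm hl)), fun hk => hk.of_uconn (.single hl)⟩
  obtain ⟨l, hkl, hlj⟩ := exists_ne_zero_of_mul_apply_ne_zero hkj
  have hk := (hiff l hkl).1 (keepRows_apply_ne_zero.1 hlj).1
  refine ⟨hk, h.solid_of_ne _ _ ?_⟩
  convert hkj using 1
  refine Finset.sum_congr rfl fun l _ => ?_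
  by_cases hl : L⁻¹ k l = 0
  · simp only [hl, zero_mul]
  · exact congrArg (L⁻¹ k l * · j) (keepRows_of F ((hiff l hl).2 hk)).symm

section Separation

variable {X Y Z : Finset V} {i : V}

lemma labelled_iff_of_inv_ne (h : IsRecursiveRep G.toPreGraph S L B F) (hkj : L⁻¹ k j ≠ 0)
    (hk : G.Nonconst Z k) (hj : G.Nonconst Z j) : G.Labelled X Z k ↔ G.Labelled X Z j := by
  rcases h.und_of_ne k j hkj with rfl | hund
  · rfl
  · exact ⟨fun hl => labelled_of_und hund hl hj, fun hl => labelled_of_und (und_symm hund) hl hk⟩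

lemma labelled_iff_of_dashed_ne (h : IsRecursiveRep G.toPreGraph S L B F) (hsep : G.Sep X Y Z)
    (hi : i ∉ Z) (hki : (1 - keepRows (G.Relevant (X ∪ Y ∪ Z)) B) k i ≠ 0) :
    G.Nonconst Z k ∧ (G.Labelled X Z i ↔ G.Labelled X Z k) := by
  by_cases hk : k = i
  · subst hk
    exact ⟨.inl hi, .rfl⟩
  · rw [Matrix.sub_apply, Matrix.one_apply_ne hk, zero_sub, neg_ne_zero,
      keepRows_apply_ne_zero] at hki
    have hdash := h.dashed_of_ne _ _ hki.2
    exact ⟨.inr ⟨i, hi, hdash⟩, (reaches_tailOpen_iff_labelled hsep (.dashed hdash hki.1) hi).symm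
      |>.trans (labelled_iff_of_dashed hsep hdash hki.1 hi)⟩

lemma labelled_iff_of_dashed_dashed_ne (h : IsRecursiveRep G.toPreGraph S L B F)
    (hsep : G.Sep X Y Z) (hi : i ∉ Z) (hj : j ∉ Z)
    (hij : ((1 - keepRows (G.Relevant (X ∪ Y ∪ Z)) B)ᵀ * L⁻¹ *
      (1 - keepRows (G.Relevant (X ∪ Y ∪ Z)) B) : Matrix V V ℝ) i j ≠ 0) :
    G.Labelled X Z i ↔ G.Labelled X Z j := by
  obtain ⟨l, hil, hlj⟩ := exists_ne_zero_of_mul_apply_ne_zero hij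
  obtain ⟨k, hik, hkl⟩ := exists_ne_zero_of_mul_apply_ne_zero hil
  obtain ⟨hk, hik⟩ := h.labelled_iff_of_dashed_ne hsep hi hik
  obtain ⟨hl, hjl⟩ := h.labelled_iff_of_dashed_ne hsep hj hlj
  exact hik.trans ((h.labelled_iff_of_inv_ne hkl hk hl).trans hjl.symm)

lemma labelled_iff_of_dashed_solid_ne (h : IsRecursiveRep G.toPreGraph S L B F)
    (hsep : G.Sep X Y Z) (hi : i ∉ Z) (hj : j ∉ Z)
    (hij : ((1 - keepRows (G.Relevant (X ∪ Y ∪ Z)) B)ᵀ *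
      (L⁻¹ * keepRows (G.CompRelevant (X ∪ Y ∪ Z)) F) : Matrix V V ℝ) i j ≠ 0) :
    G.Labelled X Z i ↔ G.Labelled X Z j := by
  obtain ⟨k, hik, hkj⟩ := exists_ne_zero_of_mul_apply_ne_zero hij
  obtain ⟨hk, hik⟩ := h.labelled_iff_of_dashed_ne hsep hi hik
  obtain ⟨hrel, hsolid⟩ := h.compRelevant_and_solid_of_ne hkj
  obtain ⟨w, hkw, hw⟩ := hrel
  rw [hik, ← labelled_iff_of_solid hsep hsolid ⟨w, hkw, hw⟩ hj hk,
    reaches_tailOpen_iff_labelled hsep (.solid hsolid hkw hw) hj]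

lemma labelled_iff_of_solid_solid_ne (h : IsRecursiveRep G.toPreGraph S L B F)
    (hsep : G.Sep X Y Z) (hi : i ∉ Z) (hj : j ∉ Z)
    (hij : ((L⁻¹ * keepRows (G.CompRelevant (X ∪ Y ∪ Z)) F)ᵀ *
      keepRows (G.CompRelevant (X ∪ Y ∪ Z)) F) i j ≠ 0) :
    G.Labelled X Z i ↔ G.Labelled X Z j := by
  obtain ⟨k, hki, hkj⟩ := exists_ne_zero_of_mul_apply_ne_zero hij
  obtain ⟨hk, hik⟩ := h.compRelevant_and_solid_of_ne hki
  obtain ⟨l, hkl, hjl⟩ := h.exists_solid (keepRows_apply_ne_zero.1 hkj).2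
  have hl := hk.of_uconn hkl
  obtain ⟨w, hkw, hw⟩ := hk
  rw [← reaches_tailOpen_iff_labelled hsep (.solid hik hkw hw) hi,
    ← reaches_tailOpen_iff_labelled hsep (.solid hjl ((uconn_symm hkl).trans hkw) hw) hj]
  exact ⟨reaches_tailOpen_of_fathers hsep hik hjl hkl ⟨w, hkw, hw⟩ hj,
    reaches_tailOpen_of_fathers hsep hjl hik (uconn_symm hkl) hl hi⟩

lemma reducedPrec_eq_zero (h : IsRecursiveRep G.toPreGraph S L B F) (hsep : G.Sep X Y Z)
    (hi : i ∉ Z) (hj : j ∉ Z) (hij : ¬ (G.Labelled X Z i ↔ G.Labelled X Z j)) :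
    reducedPrec G.toPreGraph (X ∪ Y ∪ Z) L B F i j = 0 := by
  set B' := keepRows (G.Relevant (X ∪ Y ∪ Z)) B with hB
  set F' := keepRows (G.CompRelevant (X ∪ Y ∪ Z)) F with hF
  have hsymm : (L⁻¹)ᵀ = L⁻¹ := by simpa using h.posDef.inv.isHermitian.eq
  have hexpand : reducedPrec G.toPreGraph (X ∪ Y ∪ Z) L B F =
      (1 - B')ᵀ * L⁻¹ * (1 - B') - (1 - B')ᵀ * (L⁻¹ * F') - ((1 - B')ᵀ * (L⁻¹ * F'))ᵀ
        + (L⁻¹ * F')ᵀ * F' := by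
    simp only [reducedPrec, reducedCoef, ← hB, ← hF, Matrix.transpose_mul, Matrix.transpose_sub,
      Matrix.transpose_add, Matrix.transpose_transpose, hsymm, Matrix.transpose_one]
    noncomm_ring
  have hBB := not_imp_comm.1 (h.labelled_iff_of_dashed_dashed_ne hsep hi hj) hij
  have hBF := not_imp_comm.1 (h.labelled_iff_of_dashed_solid_ne hsep hi hj) hij
  have hFB := not_imp_comm.1 (h.labelled_iff_of_dashed_solid_ne hsep hj hi) (hij ∘ Iff.symm)
  have hFF := not_imp_comm.1 (h.labelled_iff_of_solid_solid_ne hsep hi hj) hij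
  rw [hexpand, Matrix.add_apply, Matrix.sub_apply, Matrix.sub_apply, Matrix.transpose_apply, hBB,
    hBF, hFB, hFF, sub_zero, sub_zero, add_zero]

end Separation

theorem globalMP (h : IsRecursiveRep G.toPreGraph S L B F) (hS : S.PosDef)
    (hπ : G.IsTopoOrder π) : G.globalMP (gaussCI S) := by
  rintro X Y Z ⟨-, hXZ, -⟩ hsep
  have hrel : ∀ v ∈ X ∪ Y ∪ Z, G.Relevant (X ∪ Y ∪ Z) v := fun v hv => .base hv
  refine gaussCI_of_precision_separated hS (h.reducedPrec_posDef hπ (U := X ∪ Y ∪ Z))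
    (T := {v | v ∉ Z ∧ G.Labelled X Z v}) (fun x hx => ?_) ?_ (fun i hi j hj => ?_)
    fun g hg v hv => ?_
  · have hxZ := Finset.disjoint_left.1 hXZ hx
    exact Finset.mem_filter_univ _ |>.2 ⟨hxZ, labelled_of_tailOpen (reaches_tailOpen_of_mem hx hxZ)⟩
  · refine Finset.disjoint_left.2 fun v hvT hv => ?_
    obtain ⟨hvZ, hlab⟩ := (Finset.mem_filter_univ _).1 hvT
    have hvY : v ∈ Y := (Finset.mem_union.1 hv).resolve_right hvZ
    exact hsep.not_reaches hvY (((reaches_tailOpen_iff_labelled hsep (hrel v (by simp [hvY]))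
      hvZ).2 hlab).mono fun _ _ hρ => hρ.1)
  · simp only [Finset.mem_union, Finset.mem_filter_univ, not_or, not_and] at hi hj
    exact h.reducedPrec_eq_zero hsep hi.1 hj.2 fun hij => hj.1 hj.2 (hij.1 hi.2)
  · refine vecMul_eqOn_of_recursive h.isUnit_det h.cov
      (fun k hk j => h.lt_and_relevant_of_ne hπ hk)
      (fun k j hkj => (h.lt_and_relevant_of_reducedCoef_ne hπ hkj).2)
      (fun k => reducedCoef_of_relevant B F) (fun k hk => hg k fun hkXZ => hk (hrel k ?_))
      (hrel v ?_)
    · exact Finset.union_subset_union_left Finset.subset_union_left hkXZ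
    · exact Finset.union_subset_union_left Finset.subset_union_right hv

end IsRecursiveRep

end RecursiveRepresentation

section TopologicalOrder

lemma exists_seq_of_reflTransGen {r : V → V → Prop} {a b : V} (h : Relation.ReflTransGen r a b) :
    ∃ (f : ℕ → V) (n : ℕ), f 0 = a ∧ f n = b ∧ ∀ i < n, r (f i) (f (i + 1)) := by
  induction h using Relation.ReflTransGen.head_induction_on with
  | refl => exact ⟨fun _ => b, 0, rfl, rfl, fun i hi => absurd hi i.not_lt_zero⟩
  | @head a c hac _ ih =>
    obtain ⟨f, n, rfl, hn, hstep⟩ := ih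
    refine ⟨fun i => Nat.casesOn i a f, n + 1, rfl, hn, fun i hi => ?_⟩
    cases i with
    | zero => exact hac
    | succ i => exact hstep i (Nat.lt_of_succ_lt_succ hi)

namespace ChainGraph

variable {G : ChainGraph V} {a b : V}

lemma not_reflTransGen_fwd_of_directed (h : G.solid a b ∨ G.dashed a b) :
    ¬ Relation.ReflTransGen G.fwd b a := fun hba => by
  obtain ⟨f, n, rfl, hn, hstep⟩ := exists_seq_of_reflTransGen hba
  refine G.no_semidirected_cycle
    ⟨fun i => Nat.casesOn i a f, n + 1, n.succ_pos, hn, h, fun i hi => ?_⟩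
  cases i with
  | zero => exact .inr h
  | succ i => exact hstep i (Nat.lt_of_succ_lt_succ hi)

lemma uconn_of_reflTransGen_fwd (hab : Relation.ReflTransGen G.fwd a b)
    (hba : Relation.ReflTransGen G.fwd b a) : G.uconn a b := by
  induction hab with
  | refl => exact .refl
  | tail hac hcb ih =>
    exact (ih (.head hcb hba)).tail (hcb.resolve_right fun h =>
      not_reflTransGen_fwd_of_directed h (hba.trans hac))

/-- The chain components are the classes of the preorder of reachability along semidirected
routes, so a linear extension of the quotient order separates them. -/
lemma exists_topoOrder [Finite V] (G : ChainGraph V) :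
    ∃ π : V → ℕ, G.IsTopoOrder π ∧ ∀ a b, π a = π b → G.uconn a b := by
  let _ : Preorder V :=
    { le := Relation.ReflTransGen G.fwd
      le_refl := fun _ => .refl
      le_trans := fun _ _ _ => .trans }
  let rank : V → LinearExtension (Antisymmetrization V (· ≤ ·)) :=
    fun v => toLinearExtension (toAntisymmetrization (· ≤ ·) v)
  let _ : Fintype (LinearExtension (Antisymmetrization V (· ≤ ·))) :=
    @Fintype.ofFinite _ (inferInstanceAs (Finite (Quotient _)))
  let e := (Fintype.orderIsoFinOfCardEq (LinearExtension (Antisymmetrization V (· ≤ ·))) rfl).symm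
  have hrank : ∀ a b, rank a = rank b ↔ a ≤ b ∧ b ≤ a := fun a b => Quotient.eq
  refine ⟨fun v => e (rank v), ⟨fun a b hab => ?_, fun a b hab => ?_⟩, fun a b hab => ?_⟩
  · have hfwd : ∀ c d, G.und c d → G.fwd c d := fun _ _ => .inl
    exact congrArg (fun q => (e q : ℕ)) ((hrank a b).2
      ⟨.mono hfwd _ _ hab, .mono hfwd _ _ (PreGraph.uconn_symm hab)⟩)
  · have hle : rank a ≤ rank b := toLinearExtension.monotone
      (toAntisymmetrization_mono (Relation.ReflTransGen.single (.inr hab)))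
    have hne : rank a ≠ rank b := fun h =>
      not_reflTransGen_fwd_of_directed hab ((hrank a b).1 h).2
    exact e.strictMono (hle.lt_of_ne hne)
  · obtain ⟨hle, hge⟩ := (hrank a b).1 (e.injective (Fin.ext hab))
    exact uconn_of_reflTransGen_fwd hle hge

end ChainGraph

end TopologicalOrder

section Components

namespace PreGraph

variable [Fintype V] {H : PreGraph V} {π : V → ℕ} {i j k : V} {K : Finset V}

lemma mem_cc : j ∈ H.cc i ↔ H.uconn i j := Finset.mem_filter_univ j

lemma self_mem_cc (H : PreGraph V) (i : V) : i ∈ H.cc i := mem_cc.2 .refl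

lemma cc_eq_of_mem (h : j ∈ H.cc i) : H.cc j = H.cc i := by
  ext k
  simp only [mem_cc] at h ⊢
  exact ⟨h.trans, (uconn_symm h).trans⟩

lemma mem_fa : j ∈ H.fa K ↔ ∃ i ∈ K, H.solid j i := Finset.mem_filter_univ j

lemma mem_mo : j ∈ H.mo K ↔ ∃ i ∈ K, H.dashed j i := Finset.mem_filter_univ j

lemma mem_fa_singleton : j ∈ H.fa {i} ↔ H.solid j i := by simp [mem_fa]

lemma mem_mo_singleton : j ∈ H.mo {i} ↔ H.dashed j i := by simp [mem_mo]

lemma mem_nb_singleton : j ∈ H.nb {i} ↔ H.und j i := by simp [nb]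

lemma IsTopoOrder.eq_of_mem_cc (hπ : H.IsTopoOrder π) (h : j ∈ H.cc i) : π j = π i :=
  (hπ.1 _ _ (mem_cc.1 h)).symm

variable [DecidableEq V]

lemma mem_pa : j ∈ H.pa K ↔ j ∈ H.fa K ∨ j ∈ H.mo K := Finset.mem_union

lemma cc_mem_ccs (H : PreGraph V) (i : V) : H.cc i ∈ H.ccs :=
  Finset.mem_image_of_mem _ (Finset.mem_univ i)

lemma eq_cc_of_mem_ccs (hK : K ∈ H.ccs) (hi : i ∈ K) : K = H.cc i := by
  obtain ⟨k, -, rfl⟩ := Finset.mem_image.1 hK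
  exact (cc_eq_of_mem hi).symm

namespace IsTopoOrder

lemma lt_of_mem_pa (hπ : H.IsTopoOrder π) (h : j ∈ H.pa (H.cc i)) : π j < π i := by
  obtain ⟨a, ha, hja⟩ : ∃ a ∈ H.cc i, H.solid j a ∨ H.dashed j a :=
    (mem_pa.1 h).elim (fun h => (mem_fa.1 h).imp fun _ => And.imp_right .inl)
      fun h => (mem_mo.1 h).imp fun _ => And.imp_right .inr
  exact hπ.eq_of_mem_cc ha ▸ hπ.2 _ _ hja

lemma disjoint_cc_pa (hπ : H.IsTopoOrder π) (i : V) : Disjoint (H.cc i) (H.pa (H.cc i)) :=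
  Finset.disjoint_left.2 fun _ ha hpa => (hπ.lt_of_mem_pa hpa).ne (hπ.eq_of_mem_cc ha)

end IsTopoOrder

end PreGraph

end Components

section Representation

variable [Fintype V] [DecidableEq V]

lemma inv_apply_eq_prec {M : Matrix V V ℝ} (hM : M.PosDef) {K : Finset V} {i : V} (hi : i ∈ K)
    (hK : ∀ k ∈ K, ∀ j ∉ K, M k j = 0) : M⁻¹ i = prec M K i := by
  have hrow : prec M K i ᵥ* M = (1 : Matrix V V ℝ) i := funext fun j => by
    by_cases hj : j ∈ K
    · exact prec_mul_apply (isUnit_det_msub hM K) hi hj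
    · have hij : i ≠ j := fun h => hj (h ▸ hi)
      rw [Matrix.one_apply_ne hij]
      refine Finset.sum_eq_zero fun k _ => ?_
      by_cases hk : k ∈ K
      · exact mul_eq_zero_of_right _ (hK k hk j hj)
      · exact mul_eq_zero_of_left (prec_of_notMem_right M i hk) _
  have hdet : IsUnit M.det := (Matrix.isUnit_iff_isUnit_det _).1 hM.isUnit
  calc M⁻¹ i = (1 : Matrix V V ℝ) i ᵥ* M⁻¹ := (congrFun (Matrix.one_mul M⁻¹) i).symm
    _ = prec M K i := by
      rw [← hrow, Matrix.vecMul_vecMul, Matrix.mul_nonsing_inv M hdet, Matrix.vecMul_one]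

namespace PreGraph

variable {H : PreGraph V} {S : Matrix V V ℝ} {π : V → ℕ} {j k l : V}

/-- The matrix `β` of regression coefficients of every node on the parents of its chain
component. -/
def coef (H : PreGraph V) (S : Matrix V V ℝ) : Matrix V V ℝ :=
  Matrix.of fun k j => regr S (H.pa (H.cc k)) k j

/-- The part of `β` that belongs to the fathers. -/
def solidCoef (H : PreGraph V) (S : Matrix V V ℝ) : Matrix V V ℝ :=
  Matrix.of fun k j => if j ∈ H.fa (H.cc k) then H.coef S k j else 0

/-- The covariance matrix of the residuals of the regressions on the parents. -/
def errCov (H : PreGraph V) (S : Matrix V V ℝ) : Matrix V V ℝ :=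
  (1 - H.coef S) * S * (1 - H.coef S)ᵀ

lemma mem_pa_of_coef_ne (h : H.coef S k j ≠ 0) : j ∈ H.pa (H.cc k) :=
  by_contra fun hj => h (regr_of_notMem S k hj)

lemma IsTopoOrder.lt_of_coef_ne (hπ : H.IsTopoOrder π) (h : H.coef S k j ≠ 0) : π j < π k :=
  hπ.lt_of_mem_pa (mem_pa_of_coef_ne h)

lemma one_sub_coef_mul_apply (H : PreGraph V) (S : Matrix V V ℝ) (k l : V) :
    ((1 - H.coef S) * S : Matrix V V ℝ) k l = condCov S (H.pa (H.cc k)) k l := by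
  simp only [condCov, coef, Matrix.mul_apply, Matrix.sub_apply, Matrix.of_apply]

lemma condCov_pa_of_lt (hS : S.PosDef) (hπ : H.IsTopoOrder π) (h1 : H.eq1 S) (hlk : π l < π k) :
    condCov S (H.pa (H.cc k)) k l = 0 := by
  by_cases hl : l ∈ H.pa (H.cc k)
  · exact condCov_of_mem hS k hl
  · exact gaussCI_iff_condCov.1 (h1 π hπ k) k (H.self_mem_cc k) l (by simp [hl, hlk])

lemma errCov_apply_of_le (hS : S.PosDef) (hπ : H.IsTopoOrder π) (h1 : H.eq1 S)
    (hlk : π l ≤ π k) : H.errCov S k l = condCov S (H.pa (H.cc k)) k l := by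
  have hzero : ∑ p, condCov S (H.pa (H.cc k)) k p * H.coef S l p = 0 :=
    Finset.sum_eq_zero fun p _ => mul_eq_zero.2 <| or_iff_not_imp_right.2 fun hp =>
      condCov_pa_of_lt hS hπ h1 ((hπ.lt_of_coef_ne hp).trans_le hlk)
  rw [errCov, Matrix.transpose_sub, Matrix.transpose_one, Matrix.mul_sub, Matrix.mul_one,
    Matrix.sub_apply, one_sub_coef_mul_apply, Matrix.mul_apply]
  simp only [one_sub_coef_mul_apply, Matrix.transpose_apply, hzero, sub_zero]

lemma transpose_errCov (hS : S.PosDef) : (H.errCov S)ᵀ = H.errCov S := by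
  have hsymm : Sᵀ = S := by simpa using hS.isHermitian.eq
  rw [errCov, Matrix.transpose_mul, Matrix.transpose_mul, Matrix.transpose_transpose, hsymm,
    Matrix.mul_assoc]

lemma errCov_of_notMem (hS : S.PosDef) (hπ : H.IsTopoOrder π)
    (hinj : ∀ a b, π a = π b → H.uconn a b) (h1 : H.eq1 S) (hl : l ∉ H.cc k) :
    H.errCov S k l = 0 := by
  rcases lt_trichotomy (π l) (π k) with hlt | heq | hlt
  · rw [errCov_apply_of_le hS hπ h1 hlt.le, condCov_pa_of_lt hS hπ h1 hlt]
  · exact absurd (mem_cc.2 (hinj k l heq.symm)) hl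
  · rw [← transpose_errCov hS, Matrix.transpose_apply, errCov_apply_of_le hS hπ h1 hlt.le,
      condCov_pa_of_lt hS hπ h1 hlt]

lemma errCov_posDef (hS : S.PosDef) (hπ : H.IsTopoOrder π) : (H.errCov S).PosDef := by
  rw [errCov, ← Matrix.conjTranspose_eq_transpose_of_trivial]
  exact hS.mul_mul_conjTranspose_same (Matrix.vecMul_injective_iff_isUnit.2
    (Matrix.mulVec_injective_iff_isUnit.1 (one_sub_mulVec_injective fun _ _ => hπ.lt_of_coef_ne)))

lemma msub_errCov (hS : S.PosDef) (hπ : H.IsTopoOrder π) (h1 : H.eq1 S) (k : V) :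
    msub (H.errCov S) (H.cc k) (H.cc k) =
      msub (condCov S (H.pa (H.cc k))) (H.cc k) (H.cc k) := by
  ext i l
  have hle : π l ≤ π i := (hπ.eq_of_mem_cc l.2).trans (hπ.eq_of_mem_cc i.2).symm |>.le
  exact (errCov_apply_of_le hS hπ h1 hle).trans (by rw [cc_eq_of_mem i.2]; rfl)

lemma lam_eq (H : PreGraph V) (S : Matrix V V ℝ) (K : Finset V) :
    H.lam S K = msub (condCov S (H.pa K)) K K := (msub_condCov S K K _).symm

lemma beta_eq (H : PreGraph V) (S : Matrix V V ℝ) (K : Finset V) :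
    H.beta S K = msub (regr S (H.pa K)) K (H.pa K) := (msub_regr S K _).symm

lemma om_eq (H : PreGraph V) (S : Matrix V V ℝ) (K : Finset V) :
    H.om S K = msub (prec S (K ∪ H.pa K)) (K ∪ H.pa K) (K ∪ H.pa K) := (msub_prec S _).symm

section Restrictions

variable (hS : S.PosDef) (hπ : H.IsTopoOrder π) (hinj : ∀ a b, π a = π b → H.uconn a b)
  (h1 : H.eq1 S)

include hS hπ hinj h1

lemma inv_errCov_apply (k : V) : (H.errCov S)⁻¹ k = prec (H.errCov S) (H.cc k) k :=
  inv_apply_eq_prec (errCov_posDef hS hπ) (H.self_mem_cc k) fun _ hi _ hj =>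
    errCov_of_notMem hS hπ hinj h1 (cc_eq_of_mem hi ▸ hj)

lemma msub_inv_errCov (k : V) :
    msub (H.errCov S)⁻¹ (H.cc k) (H.cc k) = (H.lam S (H.cc k))⁻¹ := by
  rw [lam_eq, ← msub_errCov hS hπ h1, ← msub_prec]
  ext i j
  have hrow := congrFun (inv_errCov_apply hS hπ hinj h1 i) j
  rwa [cc_eq_of_mem i.2] at hrow

lemma und_of_inv_errCov_ne (h8 : H.eq8 S) (hkl : (H.errCov S)⁻¹ k l ≠ 0) :
    k = l ∨ H.und k l := by
  by_contra! hne
  refine hkl ?_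
  by_cases hl : l ∈ H.cc k
  · have hzero := h8 _ (H.cc_mem_ccs k) k (H.self_mem_cc k) l hl hne.1.symm
      fun hnb => hne.2 (und_symm (mem_nb_singleton.1 hnb))
    rwa [← msub_inv_errCov hS hπ hinj h1] at hzero
  · rw [inv_errCov_apply hS hπ hinj h1, prec_of_notMem_right _ k hl]

lemma msub_inv_errCov_mul_solidCoef (k : V) :
    msub ((H.errCov S)⁻¹ * H.solidCoef S) (H.cc k) (H.fa (H.cc k)) =
      -msub (prec S (H.cc k ∪ H.pa (H.cc k))) (H.cc k) (H.fa (H.cc k)) := by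
  have hdisj := hπ.disjoint_cc_pa k
  have hsolid : msub (H.solidCoef S) (H.cc k) (H.fa (H.cc k)) =
      msub (regr S (H.pa (H.cc k))) (H.cc k) (H.fa (H.cc k)) := by
    ext i j
    simp [msub, solidCoef, coef, cc_eq_of_mem i.2]
  rw [← inv_msub_condCov_mul_msub_regr hS hdisj (hdisj.mono_right Finset.subset_union_left),
    ← lam_eq, ← msub_inv_errCov hS hπ hinj h1, ← hsolid, msub_mul_msub]
  intro i hi j _ v hv
  rw [inv_errCov_apply hS hπ hinj h1, cc_eq_of_mem hi, prec_of_notMem_right _ i hv, zero_mul]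

lemma solid_of_inv_errCov_mul_solidCoef_ne (h7 : H.eq7 S)
    (hkj : ((H.errCov S)⁻¹ * H.solidCoef S : Matrix V V ℝ) k j ≠ 0) : H.solid j k := by
  have hj : j ∈ H.fa (H.cc k) := by
    obtain ⟨l, hkl, hlj⟩ := exists_ne_zero_of_mul_apply_ne_zero hkj
    have hl : l ∈ H.cc k := by_contra fun hl => hkl <| by
      rw [inv_errCov_apply hS hπ hinj h1, prec_of_notMem_right _ k hl]
    exact cc_eq_of_mem hl ▸ by_contra fun hj => hlj (if_neg hj)
  by_contra hne
  have hzero := h7 _ (H.cc_mem_ccs k) k (H.self_mem_cc k) j (mem_pa.2 (.inl hj)) hj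
    fun h => hne (mem_fa_singleton.1 h)
  have hprec := congrFun₂ (msub_inv_errCov_mul_solidCoef hS hπ hinj h1 k)
    ⟨k, H.self_mem_cc k⟩ ⟨j, hj⟩
  rw [om_eq] at hzero
  exact hkj (hprec.trans (neg_eq_zero.2 hzero))

end Restrictions

lemma dashed_of_coef_sub_solidCoef_ne (h6 : H.eq6 S)
    (hkj : (H.coef S - H.solidCoef S) k j ≠ 0) : H.dashed j k := by
  have hfa : j ∉ H.fa (H.cc k) := fun hj => hkj (sub_eq_zero.2 (if_pos hj).symm)
  have hcoef : H.coef S k j ≠ 0 := by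
    rwa [Matrix.sub_apply, solidCoef, Matrix.of_apply, if_neg hfa, sub_zero] at hkj
  have hpa := mem_pa_of_coef_ne hcoef
  by_contra hne
  have hzero := h6 _ (H.cc_mem_ccs k) k (H.self_mem_cc k) j hpa ((mem_pa.1 hpa).resolve_left hfa)
    fun h => hne (mem_mo_singleton.1 h)
  rw [beta_eq] at hzero
  exact hcoef hzero

theorem isRecursiveRep_of_eqs (hS : S.PosDef) (hπ : H.IsTopoOrder π)
    (hinj : ∀ a b, π a = π b → H.uconn a b) (h : H.eqs S) :
    IsRecursiveRep H S (H.errCov S) (H.coef S - H.solidCoef S) (H.solidCoef S) := by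
  obtain ⟨h1, h6, h7, h8⟩ := h
  exact
    { posDef := errCov_posDef hS hπ
      cov := by rw [sub_add_cancel, errCov]
      und_of_ne := fun _ _ => und_of_inv_errCov_ne hS hπ hinj h1 h8
      uconn_of_ne := fun _ _ => not_imp_comm.1 fun hl =>
        errCov_of_notMem hS hπ hinj h1 (mem_cc.not.2 hl)
      dashed_of_ne := fun _ _ => dashed_of_coef_sub_solidCoef_ne h6
      solid_of_ne := fun _ _ => solid_of_inv_errCov_mul_solidCoef_ne hS hπ hinj h1 h7 }

end PreGraph

theorem ChainGraph.globalMP_of_eqs {G : ChainGraph V} {S : Matrix V V ℝ} (hS : S.PosDef)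
    (h : G.eqs S) : G.globalMP (gaussCI S) := by
  obtain ⟨π, hπ, hinj⟩ := G.exists_topoOrder
  exact (PreGraph.isRecursiveRep_of_eqs hS hπ hinj h).globalMP hS hπ

end Representation

section Separations

namespace PreGraph

variable {H : PreGraph V} {a b c : V} {Z : Finset V}

lemma adj_symm (h : H.adj a b) : H.adj b a := by
  unfold adj und at *
  tauto

lemma colliderTriple_symm (h : H.colliderTriple a c b) : H.colliderTriple b c a := by
  unfold colliderTriple und at *
  tauto

namespace Route

variable {ρ : H.Route} {k p q : ℕ}

/-- The route traversed backwards. -/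
def rev (ρ : H.Route) : H.Route where
  len := ρ.len
  nodes i := ρ.nodes (ρ.len - i)
  adj_step i hi := by
    obtain ⟨d, hd⟩ := Nat.exists_eq_add_of_lt hi
    rw [show ρ.len - i = d + 1 by omega, show ρ.len - (i + 1) = d by omega]
    exact adj_symm (ρ.adj_step d (by omega))

lemma rev_len (ρ : H.Route) : ρ.rev.len = ρ.len := rfl

lemma rev_nodes (ρ : H.Route) (i : ℕ) : ρ.rev.nodes i = ρ.nodes (ρ.len - i) := rfl

lemma colliderNodeAt_rev (hk : k ≤ ρ.len) :
    ρ.rev.colliderNodeAt k ↔ ρ.colliderNodeAt (ρ.len - k) := by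
  simp only [colliderNodeAt, rev_len, rev_nodes]
  grind [colliderTriple_symm]

lemma colliderSectionOcc_rev (hp : p ≤ ρ.len) (hq : q ≤ ρ.len) :
    ρ.rev.colliderSectionOcc p q ↔ ρ.colliderSectionOcc (ρ.len - q) (ρ.len - p) := by
  simp only [colliderSectionOcc, rev_len, rev_nodes]
  have hund : (∀ m, p ≤ m → m < q → H.und (ρ.nodes (ρ.len - m)) (ρ.nodes (ρ.len - (m + 1)))) ↔
      ∀ m, ρ.len - q ≤ m → m < ρ.len - p → H.und (ρ.nodes m) (ρ.nodes (m + 1)) := by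
    refine ⟨fun h m hqm hmp => ?_, fun h m hpm hmq => ?_⟩
    · have := und_symm (h (ρ.len - (m + 1)) (by omega) (by omega))
      rwa [show ρ.len - (ρ.len - (m + 1)) = m + 1 by omega,
        show ρ.len - (ρ.len - (m + 1) + 1) = m by omega] at this
    · have := und_symm (h (ρ.len - (m + 1)) (by omega) (by omega))
      rwa [show ρ.len - (m + 1) + 1 = ρ.len - m by omega] at this
  have hlast : 1 ≤ p → ρ.len - (p - 1) = ρ.len - p + 1 := by omega
  refine ⟨fun ⟨hp', _, _, h, hin, hout⟩ => ⟨by omega, by omega, by omega, hund.1 h, ?_, ?_⟩,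
    fun ⟨_, _, _, h, hin, hout⟩ => ⟨by omega, by omega, by omega, hund.2 h, ?_, ?_⟩⟩
  · rwa [Nat.sub_sub]
  · rwa [← hlast hp']
  · rwa [hlast (by omega)]
  · rwa [← Nat.sub_sub]

lemma IsZOpen.rev (hρ : ρ.IsZOpen Z) : ρ.rev.IsZOpen Z := by
  refine ⟨fun k hk => ?_, fun p q hpq => ?_, fun k hk hnode hsection => ?_⟩
  · have hlt : k < ρ.len := hk.2.1
    exact hρ.1 _ ((colliderNodeAt_rev hlt.le).1 hk)
  · have hq : q + 1 ≤ ρ.len := hpq.2.2.1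
    have hp : p ≤ q := hpq.2.1
    obtain ⟨m, hm, hm', hmZ⟩ :=
      hρ.2.1 _ _ ((colliderSectionOcc_rev (by omega) (by omega)).1 hpq)
    exact ⟨ρ.len - m, by omega, by omega, by rwa [rev_nodes, Nat.sub_sub_self (by omega)]⟩
  · have hk : k ≤ ρ.len := hk
    refine hρ.2.2 _ (Nat.sub_le _ _) (fun h => hnode ((colliderNodeAt_rev hk).2 h)) ?_
    rintro ⟨p, q, hpq, hpk, hkq⟩
    have hq : q + 1 ≤ ρ.len := hpq.2.2.1
    refine hsection ⟨ρ.len - q, ρ.len - p, ?_, by omega, by omega⟩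
    rwa [colliderSectionOcc_rev (by omega) (by omega), Nat.sub_sub_self (by omega),
      Nat.sub_sub_self (by omega)]

lemma IsZOpen.exists_mem_of_arrows (hρ : ρ.IsZOpen Z) (hp : 1 ≤ p) (hpq : p ≤ q)
    (hq : q < ρ.len) (hund : ∀ m, p ≤ m → m < q → H.und (ρ.nodes m) (ρ.nodes (m + 1)))
    (hin : H.solid (ρ.nodes (p - 1)) (ρ.nodes p) ∨ H.dashed (ρ.nodes (p - 1)) (ρ.nodes p))
    (hout : H.solid (ρ.nodes (q + 1)) (ρ.nodes q) ∨ H.dashed (ρ.nodes (q + 1)) (ρ.nodes q)) :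
    ∃ m, p ≤ m ∧ m ≤ q ∧ ρ.nodes m ∈ Z := by
  by_cases hsolid : H.solid (ρ.nodes (p - 1)) (ρ.nodes p) ∧ H.solid (ρ.nodes (q + 1)) (ρ.nodes q)
  · exact hρ.2.1 p q ⟨hp, hpq, hq, hund, hsolid⟩
  · have hcollider : ρ.colliderNodeAt p ∨ ρ.colliderNodeAt q := by
      simp only [colliderNodeAt, colliderTriple]
      rcases hpq.eq_or_lt with rfl | hlt
      · tauto
      · have hfirst := hund p le_rfl hlt
        have hlast := hund (q - 1) (by omega) (by omega)
        rw [Nat.sub_add_cancel (hp.trans hpq)] at hlast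
        grind
    rcases hcollider with h | h
    · exact ⟨p, le_rfl, hpq, hρ.1 p h⟩
    · exact ⟨q, hpq, le_rfl, hρ.1 q h⟩

end Route

lemma sep_of_forall {X Y : Finset V}
    (h : ∀ ρ : H.Route, ρ.nodes 0 ∈ X → ρ.nodes ρ.len ∈ Y → ¬ ρ.IsZOpen Z) : H.Sep X Y Z := by
  rintro ⟨ρ, ⟨hX, hY⟩ | ⟨hY, hX⟩, hρ⟩
  · exact h ρ hX hY hρ
  · exact h ρ.rev hX (by rwa [Route.rev_nodes, Route.rev_len, Nat.sub_self]) hρ.rev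

end PreGraph

lemma exists_plateau_of_lt {f : ℕ → ℕ} {n N k : ℕ} (hstart : f 0 ≤ n) (hend : f N ≤ n)
    (hk : k ≤ N) (hfk : n < f k) :
    ∃ M, n < M ∧ ∃ p q, 1 ≤ p ∧ p ≤ q ∧ q < N ∧ f (p - 1) < M ∧ f (q + 1) < M ∧
      ∀ m, p ≤ m → m ≤ q → f m = M := by
  obtain ⟨t, ht, hmax⟩ :=
    Finset.exists_max_image (Finset.range (N + 1)) f ⟨k, Finset.mem_range_succ_iff.2 hk⟩
  simp only [Finset.mem_range_succ_iff] at ht hmax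
  have hlt := hfk.trans_le (hmax k hk)
  have hfirst : ∃ p, f p = f t := ⟨t, rfl⟩
  have hpt : Nat.find hfirst ≤ t := Nat.find_min' hfirst rfl
  have hleave : ∃ r, Nat.find hfirst ≤ r ∧ f r ≠ f t := ⟨N, hpt.trans ht, by omega⟩
  have hfirst_spec := Nat.find_spec hfirst
  have hleave_spec := Nat.find_spec hleave
  have hleave_le : Nat.find hleave ≤ N := Nat.find_min' hleave ⟨hpt.trans ht, by omega⟩
  have hbefore : ∀ m < Nat.find hfirst, f m ≠ f t := fun _ => Nat.find_min hfirst
  have hplateau : ∀ m < Nat.find hleave, Nat.find hfirst ≤ m → f m = f t := fun m hm hpm =>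
    by_contra fun h => Nat.find_min hleave hm ⟨hpm, h⟩
  generalize Nat.find hfirst = p at *
  generalize Nat.find hleave = r at *
  have hp : p ≠ 0 := by rintro rfl; omega
  have hpr : p ≠ r := by rintro rfl; exact hleave_spec.2 hfirst_spec
  refine ⟨f t, hlt, p, r - 1, by omega, by omega, by omega, ?_, ?_,
    fun m hpm hm => hplateau m (by omega) hpm⟩
  · exact (hmax _ (by omega)).lt_of_ne (hbefore _ (by omega))
  · rw [Nat.sub_add_cancel (by omega)]
    exact (hmax r hleave_le).lt_of_ne hleave_spec.2

namespace PreGraph.IsTopoOrder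

variable {H : PreGraph V} {π : V → ℕ} {a b : V}

lemma und_of_adj_of_eq (hπ : H.IsTopoOrder π) (h : H.adj a b) (heq : π a = π b) : H.und a b := by
  have hab := hπ.2 a b
  have hba := hπ.2 b a
  unfold adj at h
  grind

lemma arrow_of_adj_of_lt (hπ : H.IsTopoOrder π) (h : H.adj a b) (hlt : π a < π b) :
    H.solid a b ∨ H.dashed a b := by
  have hab : H.und a b → π a = π b := fun h => hπ.1 a b (.single h)
  have hba := hπ.2 b a
  unfold adj at h
  grind

/-- On a plateau above the bound the route would collide, but no node of `Z` is that high. -/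
lemma le_of_isZOpen (hπ : H.IsTopoOrder π) {Z : Finset V} {n : ℕ} {ρ : H.Route}
    (hρ : ρ.IsZOpen Z) (hZ : ∀ z ∈ Z, π z ≤ n) (hstart : π (ρ.nodes 0) ≤ n)
    (hend : π (ρ.nodes ρ.len) ≤ n) {k : ℕ} (hk : k ≤ ρ.len) : π (ρ.nodes k) ≤ n := by
  by_contra! hnk
  obtain ⟨M, hnM, p, q, hp, hpq, hq, hbefore, hafter, hplateau⟩ :=
    exists_plateau_of_lt (f := fun k => π (ρ.nodes k)) hstart hend hk hnk
  have hin := ρ.adj_step (p - 1) (by omega)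
  rw [Nat.sub_add_cancel hp] at hin
  obtain ⟨m, hpm, hmq, hmZ⟩ := hρ.exists_mem_of_arrows hp hpq hq
    (fun m hpm hmq => hπ.und_of_adj_of_eq (ρ.adj_step m (by omega))
      ((hplateau m hpm hmq.le).trans (hplateau (m + 1) (by omega) hmq).symm))
    (hπ.arrow_of_adj_of_lt hin (hbefore.trans_eq (hplateau p le_rfl hpq).symm))
    (hπ.arrow_of_adj_of_lt (adj_symm (ρ.adj_step q hq))
      (hafter.trans_eq (hplateau q hpq le_rfl).symm))
  exact (hnM.trans_eq (hplateau m hpm hmq).symm).not_ge (hZ _ hmZ)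

end PreGraph.IsTopoOrder

namespace ChainGraph

open PreGraph

variable {G : ChainGraph V}

lemma notMem_of_tail {Z : Finset V} {ρ : G.Route} (hρ : ρ.IsZOpen Z) {k : ℕ} (hk : k < ρ.len)
    (h : G.solid (ρ.nodes (k + 1)) (ρ.nodes k) ∨ G.dashed (ρ.nodes (k + 1)) (ρ.nodes k)) :
    ρ.nodes (k + 1) ∉ Z := by
  refine hρ.2.2 (k + 1) hk
    (fun hc => not_colliderTriple_of_arrow h (colliderTriple_symm hc.2.2)) ?_
  rintro ⟨p, q, ⟨hp, -, -, hund, hin, -⟩, hpk, hkq⟩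
  refine not_fwd_of_arrow h ?_
  rcases hpk.lt_or_eq with hpk | rfl
  · exact .inl (hund k (by omega) (by omega))
  · exact .inr (.inl hin)

lemma colliderNodeAt_one_of_mem {Z : Finset V} {ρ : G.Route} (hρ : ρ.IsZOpen Z)
    (hlen : 0 < ρ.len) (hund : G.und (ρ.nodes 0) (ρ.nodes 1)) (hmem : ρ.nodes 1 ∈ Z) :
    ρ.colliderNodeAt 1 := by
  by_contra hcollider
  refine hρ.2.2 1 hlen hcollider ?_ hmem
  rintro ⟨p, q, ⟨hp, -, -, -, hin, -⟩, hp1, -⟩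
  obtain rfl : p = 1 := le_antisymm hp1 hp
  exact (not_solid_of_und hund).1 hin

variable [Fintype V] [DecidableEq V] {π : V → ℕ} {i j : V} {Z : Finset V}

lemma disjoint_cc_pa (G : ChainGraph V) (i : V) : Disjoint (G.cc i) (G.pa (G.cc i)) := by
  obtain ⟨π, hπ, -⟩ := G.exists_topoOrder
  exact hπ.disjoint_cc_pa i

lemma next_of_isZOpen (hπ : G.IsTopoOrder π) {ρ : G.Route} (hρ : ρ.IsZOpen Z)
    (hZ : ∀ z ∈ Z, π z ≤ π i) (hstart : ρ.nodes 0 ∈ G.cc i) (hend : π (ρ.nodes ρ.len) ≤ π i)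
    {k : ℕ} (hk : k < ρ.len) (hki : ρ.nodes k ∈ G.cc i) :
    (ρ.nodes (k + 1) ∈ G.cc i ∧ G.und (ρ.nodes k) (ρ.nodes (k + 1))) ∨
      (ρ.nodes (k + 1) ∈ G.pa (G.cc i) ∧ ρ.nodes (k + 1) ∉ Z ∧
        (G.solid (ρ.nodes (k + 1)) (ρ.nodes k) ∨ G.dashed (ρ.nodes (k + 1)) (ρ.nodes k))) := by
  have hadj := ρ.adj_step k hk
  have hle : π (ρ.nodes (k + 1)) ≤ π (ρ.nodes k) := hπ.eq_of_mem_cc hki ▸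
    hπ.le_of_isZOpen hρ hZ (hπ.eq_of_mem_cc hstart).le hend hk
  rcases hle.lt_or_eq with hlt | heq
  · have harrow := hπ.arrow_of_adj_of_lt (adj_symm hadj) hlt
    exact .inr ⟨mem_pa.2 (harrow.imp (fun h => mem_fa.2 ⟨_, hki, h⟩) fun h => mem_mo.2 ⟨_, hki, h⟩),
      notMem_of_tail hρ hk harrow, harrow⟩
  · have hund := hπ.und_of_adj_of_eq hadj heq.symm
    exact .inl ⟨mem_cc.2 ((mem_cc.1 hki).tail hund), hund⟩

lemma exists_exit_of_isZOpen (hπ : G.IsTopoOrder π) {ρ : G.Route} (hρ : ρ.IsZOpen Z)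
    (hZ : ∀ z ∈ Z, π z ≤ π i) (hstart : ρ.nodes 0 ∈ G.cc i) (hend : π (ρ.nodes ρ.len) < π i) :
    ∃ k < ρ.len, ρ.nodes k ∈ G.cc i ∧ (∀ m < k, G.und (ρ.nodes m) (ρ.nodes (m + 1))) ∧
      ρ.nodes (k + 1) ∈ G.pa (G.cc i) ∧ ρ.nodes (k + 1) ∉ Z ∧
      (G.solid (ρ.nodes (k + 1)) (ρ.nodes k) ∨ G.dashed (ρ.nodes (k + 1)) (ρ.nodes k)) := by
  have hleave : ∃ t, ρ.nodes t ∉ G.cc i := ⟨ρ.len, fun h => hend.ne (hπ.eq_of_mem_cc h)⟩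
  have hle : Nat.find hleave ≤ ρ.len :=
    Nat.find_min' hleave fun h => hend.ne (hπ.eq_of_mem_cc h)
  have hinside : ∀ m < Nat.find hleave, ρ.nodes m ∈ G.cc i := fun m hm =>
    not_not.1 (Nat.find_min hleave hm)
  obtain ⟨k, hk⟩ := Nat.exists_eq_succ_of_ne_zero (n := Nat.find hleave)
    fun h => Nat.find_spec hleave (h ▸ hstart)
  have houtside := Nat.find_spec hleave
  rw [hk] at houtside
  have hnext := fun m (hm : m ≤ k) =>
    next_of_isZOpen hπ hρ hZ hstart hend.le (by omega) (hinside m (by omega))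
  refine ⟨k, by omega, hinside k (by omega), fun m hm => ?_,
    (hnext k le_rfl).resolve_left fun h => houtside h.1⟩
  exact ((hnext m hm.le).resolve_right fun h => Finset.disjoint_left.1 (G.disjoint_cc_pa i)
    (hinside (m + 1) (by omega)) h.1).2

lemma sep_preceding (hπ : G.IsTopoOrder π) (i : V) :
    G.Sep (G.cc i) ((Finset.univ.filter fun b => π b < π i) \ G.pa (G.cc i)) (G.pa (G.cc i)) :=
  PreGraph.sep_of_forall fun _ hstart hend hρ =>
    have hbelow := (Finset.mem_filter.1 (Finset.mem_sdiff.1 hend).1).2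
    have ⟨_, _, _, _, hpa, hnot, _⟩ := exists_exit_of_isZOpen hπ hρ
      (fun _ hz => (hπ.lt_of_mem_pa hz).le) hstart hbelow
    hnot hpa

/-- The route has to leave the component through the mother `j`, and the node it leaves is `i`,
because otherwise it would be a collider outside the conditioning set. -/
lemma sep_mother (hG : G.IsUCG) (hj : j ∈ G.mo (G.cc i)) (hji : ¬ G.dashed j i) :
    G.Sep {i} {j} (G.pa (G.cc i) \ {j}) := by
  obtain ⟨π, hπ, -⟩ := G.exists_topoOrder
  refine PreGraph.sep_of_forall fun ρ hstart hend hρ => ?_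
  rw [Finset.mem_singleton] at hstart hend
  obtain ⟨k, hk, hki, hund, hpa, hnot, harrow⟩ := exists_exit_of_isZOpen hπ hρ
    (fun z hz => (hπ.lt_of_mem_pa (Finset.mem_sdiff.1 hz).1).le) (hstart ▸ G.self_mem_cc _)
    (hend ▸ hπ.lt_of_mem_pa (mem_pa.2 (.inr hj)))
  have hkj : ρ.nodes (k + 1) = j :=
    by_contra fun h => hnot (Finset.mem_sdiff.2 ⟨hpa, by simpa using h⟩)
  have hdashed : G.dashed (ρ.nodes (k + 1)) (ρ.nodes k) := harrow.resolve_left fun hsolid =>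
    Finset.disjoint_left.1 (hG _ (cc_mem_ccs _ i)) (mem_fa.2 ⟨_, hki, hkj ▸ hsolid⟩) hj
  cases k with
  | zero => exact hji (by rwa [hkj, hstart] at hdashed)
  | succ k =>
    have hkZ := hρ.1 (k + 1) ⟨by omega, hk, .inr (.inr (.inl ⟨hund k (by omega), hdashed⟩))⟩
    exact Finset.disjoint_left.1 (G.disjoint_cc_pa i) hki (Finset.mem_sdiff.1 hkZ).1

/-- If the route starts with an edge `i − v`, then `v` is in the conditioning set, hence a
collider, and the next node can only be `j`, which is not a mother. -/
lemma sep_pair (hj : j ∈ G.cc i ∪ G.pa (G.cc i)) (hij : i ≠ j) (hund : ¬ G.und i j)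
    (hsolid : ¬ G.solid j i) (hmo : j ∉ G.mo (G.cc i)) :
    G.Sep {i} {j} ((G.cc i ∪ G.pa (G.cc i)) \ {i, j}) := by
  obtain ⟨π, hπ, -⟩ := G.exists_topoOrder
  have hle : ∀ z ∈ G.cc i ∪ G.pa (G.cc i), π z ≤ π i := fun z hz =>
    (Finset.mem_union.1 hz).elim (fun h => (hπ.eq_of_mem_cc h).le) fun h => (hπ.lt_of_mem_pa h).le
  refine PreGraph.sep_of_forall fun ρ hstart hend hρ => ?_
  rw [Finset.mem_singleton] at hstart hend
  have hlen : 0 < ρ.len := Nat.pos_of_ne_zero fun h => hij (by rw [← hend, h, hstart])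
  have hnext := fun k (hk : k < ρ.len) => next_of_isZOpen hπ hρ (k := k)
    (fun z hz => hle z (Finset.mem_sdiff.1 hz).1) (hstart ▸ G.self_mem_cc i) (hend ▸ hle j hj) hk
  have hparent : ∀ v ∈ G.pa (G.cc i), v ∉ (G.cc i ∪ G.pa (G.cc i)) \ {i, j} → v = j := by
    intro v hv hnot
    have hvi : v ≠ i := fun h =>
      Finset.disjoint_left.1 (G.disjoint_cc_pa i) (G.self_mem_cc i) (h ▸ hv)
    simpa [hv, hvi] using hnot
  rcases hnext 0 hlen (hstart ▸ G.self_mem_cc i) with ⟨hcc, hedge⟩ | ⟨hpa, hnot, harrow⟩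
  · have hne : ρ.nodes 1 ≠ i ∧ ρ.nodes 1 ≠ j := by
      constructor <;> intro h <;> rw [hstart, zero_add, h] at hedge
      exacts [hedge.elim (G.undir_irrefl i) (G.undir_irrefl i), hund hedge]
    obtain ⟨-, hlen', hcollider⟩ := colliderNodeAt_one_of_mem hρ hlen hedge
      (Finset.mem_sdiff.2 ⟨Finset.mem_union_left _ hcc, by simpa using hne⟩)
    have hdashed : G.dashed (ρ.nodes 2) (ρ.nodes 1) :=
      (colliderTriple_iff_of_und (und_symm hedge)).1 (colliderTriple_symm hcollider)
    have hmother : ρ.nodes 2 ∈ G.mo (G.cc i) := mem_mo.2 ⟨_, hcc, hdashed⟩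
    rcases hnext 1 hlen' hcc with ⟨-, hedge'⟩ | ⟨hpa, hnot, -⟩
    · exact (not_dashed_of_und hedge').2 hdashed
    · exact hmo (hparent _ hpa hnot ▸ hmother)
  · rw [hparent _ hpa hnot, hstart] at harrow
    exact harrow.elim hsolid fun h => hmo (mem_mo.2 ⟨i, G.self_mem_cc i, h⟩)

end ChainGraph

end Separations

section Necessity

namespace ChainGraph

open PreGraph

variable [Fintype V] [DecidableEq V] {G : ChainGraph V} {S : Matrix V V ℝ} {i j : V}

lemma eq1_of_globalMP (h : G.globalMP (gaussCI S)) : G.eq1 S := fun _ hπ i =>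
  h _ _ _ ⟨Finset.disjoint_left.2 fun _ ha hb =>
    (Finset.mem_filter.1 (Finset.mem_sdiff.1 hb).1).2.ne (hπ.eq_of_mem_cc ha),
    G.disjoint_cc_pa i, Finset.sdiff_disjoint⟩ (sep_preceding hπ i)

lemma eq6_of_globalMP (hG : G.IsUCG) (hS : S.PosDef) (h : G.globalMP (gaussCI S)) :
    G.eq6 S := by
  intro K hK i hi j hj hjmo hji
  obtain rfl := eq_cc_of_mem_ccs hK hi
  have hi_pa : i ∉ G.pa (G.cc i) := Finset.disjoint_left.1 (G.disjoint_cc_pa i) hi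
  have hij : i ≠ j := fun h => hi_pa (h ▸ hj)
  have hCI : condCov S (G.pa (G.cc i) \ {j}) i j = 0 :=
    gaussCI_iff_condCov.1 (h {i} {j} (G.pa (G.cc i) \ {j})
      ⟨by simpa using hij, by simp [hi_pa], by simp⟩
      (sep_mother hG hjmo fun h => hji (mem_mo_singleton.2 h))) i (by simp) j (by simp)
  have hregr : regr S (G.pa (G.cc i) \ {j}) i = regr S (G.pa (G.cc i)) i := by
    refine eq_regr_of_vecMul_eq hS (fun q hq => regr_of_notMem S i (by simp [hq])) fun w hw => ?_
    have hres : condCov S (G.pa (G.cc i) \ {j}) i w = 0 := by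
      by_cases hwj : w = j
      · exact hwj ▸ hCI
      · exact condCov_of_mem hS i (by simp [hw, hwj])
    rw [condCov, Matrix.sub_mul, Matrix.one_mul, Matrix.sub_apply] at hres
    exact (sub_eq_zero.1 hres).symm
  rw [beta_eq]
  exact (congrFun hregr j).symm.trans (regr_of_notMem S i (by simp))

lemma prec_eq_zero_of_globalMP (hS : S.PosDef) (h : G.globalMP (gaussCI S))
    (hj : j ∈ G.cc i ∪ G.pa (G.cc i)) (hij : i ≠ j) (hund : ¬ G.und i j)
    (hsolid : ¬ G.solid j i) (hmo : j ∉ G.mo (G.cc i)) :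
    prec S (G.cc i ∪ G.pa (G.cc i)) i j = 0 :=
  prec_eq_zero_of_gaussCI hS (Finset.mem_union_left _ (G.self_mem_cc i)) hij
    (h {i} {j} ((G.cc i ∪ G.pa (G.cc i)) \ {i, j}) ⟨by simpa using hij, by simp, by simp⟩
      (sep_pair hj hij hund hsolid hmo))

lemma eq7_of_globalMP (hG : G.IsUCG) (hS : S.PosDef) (h : G.globalMP (gaussCI S)) :
    G.eq7 S := by
  intro K hK i hi j hj hjfa hji
  obtain rfl := eq_cc_of_mem_ccs hK hi
  have hj_cc : j ∉ G.cc i := Finset.disjoint_right.1 (G.disjoint_cc_pa i) hj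
  rw [om_eq]
  exact prec_eq_zero_of_globalMP hS h (Finset.mem_union_right _ hj) (fun h => hj_cc (h ▸ hi))
    (fun h => hj_cc (mem_cc.2 (.single h))) (fun h => hji (mem_fa_singleton.2 h))
    (Finset.disjoint_left.1 (hG _ hK) hjfa)

lemma eq8_of_globalMP (hS : S.PosDef) (h : G.globalMP (gaussCI S)) : G.eq8 S := by
  intro K hK i hi j hj hji hnb
  obtain rfl := eq_cc_of_mem_ccs hK hi
  have hj_pa : j ∉ G.pa (G.cc i) := Finset.disjoint_left.1 (G.disjoint_cc_pa i) hj
  rw [lam_eq, inv_msub_condCov hS (G.disjoint_cc_pa i)]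
  refine prec_eq_zero_of_globalMP hS h (Finset.mem_union_left _ hj) hji.symm
    (fun h => hnb (mem_nb_singleton.2 (und_symm h))) (fun h => hj_pa (mem_pa.2 (.inl ?_)))
    fun h => hj_pa (mem_pa.2 (.inr h))
  exact mem_fa.2 ⟨i, hi, h⟩

lemma eqs_of_globalMP (hG : G.IsUCG) (hS : S.PosDef) (h : G.globalMP (gaussCI S)) : G.eqs S :=
  ⟨eq1_of_globalMP h, eq6_of_globalMP hG hS h, eq7_of_globalMP hG hS h, eq8_of_globalMP hS h⟩

end ChainGraph

end Necessity

/-- **Theorem 2.** A Gaussian distribution `N(0, Σ)` with positive definite `Σ` satisfies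
Equation 1 and the zero restrictions of Equations 6–8 with respect to a UCG `G` if and only
if it satisfies the global Markov property with respect to `G`. -/
theorem ucg_zero_restrictions_iff_global_markov
    {V : Type*} [Fintype V] [DecidableEq V] (G : ChainGraph V) (hG : G.IsUCG)
    (S : Matrix V V ℝ) (hS : S.PosDef) :
    G.toPreGraph.eqs S ↔ G.toPreGraph.globalMP (gaussCI S) :=
  ⟨ChainGraph.globalMP_of_eqs hS, ChainGraph.eqs_of_globalMP hG hS⟩
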